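/- arXiv:2212.13315 — 4 statements merged into one kernel-verified Lean document; each statement's English description precedes it below -/
import Mathlib

section
/- Let p be a prime and let K be a perfectoid field of characteristic p with ring of integers O_K and pseudo-uniformizer π. Then the integral perfectoid Tate algebra O_K⟨x^{1/p^∞}⟩ — the π-adic completion of the monoid algebra O_K[x^{1/p^∞}] — admits a family (𝔭_λ)_{λ∈(0,1)} of prime ideals, indexed by the real interval (0,1), with 𝔭_λ ⊊ 𝔭_μ whenever λ < μ; in particular it has uncountable Krull dimension. -/
set_option synthInstance.maxHeartbeats 1000000
set_option maxHeartbeats 1000000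

/-- The additive monoid of nonnegative rationals with `p`-power denominator. -/
def pPowRat (p : ℕ) : AddSubmonoid ℚ where
  carrier := {q : ℚ | 0 ≤ q ∧ ∃ (n : ℕ) (m : ℤ), (p : ℚ) ^ n * q = (m : ℚ)}
  zero_mem' := ⟨le_rfl, 0, 0, by simp⟩
  add_mem' := by
    rintro a b ⟨ha, n, m, hm⟩ ⟨hb, n', m', hm'⟩
    refine ⟨add_nonneg ha hb, n + n', m * (p : ℤ) ^ n' + m' * (p : ℤ) ^ n, ?_⟩
    push_cast
    rw [← hm, ← hm']
    ring

/-!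
Let `t` be a compatible system of `p`-power roots of `π`, so that `x` can be specialized to
`π ^ p ^ d k` for every `k`. The order of vanishing in `π` at the `k`-th specialization filters
the completed algebra. The elements whose order of vanishing exceeds, along a nonprincipal
ultrafilter, every multiple of `g k` form a prime ideal, and this ideal shrinks as `g` grows. If
`d` increases fast enough, the series `∑ π ^ g j * x ^ (1 / p ^ d j)` has order exactly `g k + 1` at
the `k`-th specialization, because its `k`-th term dominates there. Hence it separates the ideal of
`g` from that of any `g' = o(g)`, and the growth rates `r ^ k` with `r` real form a continuum.
-/

section PrimeFiltration

variable {A B : Type*} [CommRing A] [CommRing B]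

/-- A descending sequence of ideals behaving like the powers of a principal ideal of a valuation
ring: an order of vanishing `< m` times an order of vanishing `< n` is an order of vanishing
`< m + n`. -/
structure IsPrimeFiltration (𝔞 : ℕ → Ideal A) : Prop where
  antitone : Antitone 𝔞
  ne_top : 𝔞 1 ≠ ⊤
  mul_notMem : ∀ {m n : ℕ} {x y : A}, x ∉ 𝔞 m → y ∉ 𝔞 n → x * y ∉ 𝔞 (m + n)

lemma isPrimeFiltration_span_singleton_pow [IsDomain A] [ValuationRing A] {π : A}
    (hπ : ¬IsUnit π) : IsPrimeFiltration fun n => Ideal.span {π} ^ n where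
  antitone _ _ := Ideal.pow_le_pow_right
  ne_top := by rwa [pow_one, Ne, Ideal.span_singleton_eq_top]
  mul_notMem {m n x y} hx hy := by
    simp only [Ideal.span_singleton_pow, Ideal.mem_span_singleton] at hx hy ⊢
    rintro ⟨c, hc⟩
    obtain ⟨a, ha⟩ := (ValuationRing.dvd_total x (π ^ m)).resolve_right hx
    obtain ⟨b, hb⟩ := (ValuationRing.dvd_total y (π ^ n)).resolve_right hy
    have hxy : x * y ≠ 0 :=
      mul_ne_zero (fun h => hx (h ▸ dvd_zero _)) (fun h => hy (h ▸ dvd_zero _))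
    have habc : a * (b * c) = 1 := mul_left_cancel₀ hxy <| by
      rw [mul_one]
      nth_rw 2 [hc]
      rw [pow_add, ha, hb]
      ring
    exact hx (ha ▸ (IsUnit.of_mul_eq_one _ habc).mul_right_dvd.2 dvd_rfl)

lemma IsPrimeFiltration.comap {𝔟 : ℕ → Ideal B} (h𝔟 : IsPrimeFiltration 𝔟) (φ : A →+* B) :
    IsPrimeFiltration fun n => (𝔟 n).comap φ where
  antitone _ _ hmn := Ideal.comap_mono (h𝔟.antitone hmn)
  ne_top := Ideal.comap_ne_top φ h𝔟.ne_top
  mul_notMem hx hy := by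
    simp only [Ideal.mem_comap, map_mul] at hx hy ⊢
    exact h𝔟.mul_notMem hx hy

/-- The extension to the `I`-adic completion of a filtration `𝔟` with `I ^ n ≤ 𝔟 n`: an element
lies in its `n`-th step when its reduction modulo `I ^ n` lies in the image of `𝔟 n`. -/
noncomputable def completedFiltration (I : Ideal A) (𝔟 : ℕ → Ideal A) (n : ℕ) :
    Ideal (AdicCompletion I A) :=
  ((𝔟 n).map (Ideal.Quotient.mk (I ^ n))).comap (AdicCompletion.evalₐ I n)

variable {I : Ideal A} {𝔟 : ℕ → Ideal A}

lemma mem_completedFiltration_iff {m n : ℕ} (hI : I ^ m ≤ 𝔟 m) (hmn : m ≤ n)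
    {x : AdicCompletion I A} {a : A}
    (hxa : AdicCompletion.evalₐ I n x = Ideal.Quotient.mk (I ^ n) a) :
    x ∈ completedFiltration I 𝔟 m ↔ a ∈ 𝔟 m := by
  have hxa' : AdicCompletion.evalₐ I m x = Ideal.Quotient.mk (I ^ m) a := by
    obtain ⟨f, rfl⟩ := AdicCompletion.mk_surjective I A x
    rw [AdicCompletion.evalₐ_mk, Ideal.Quotient.eq] at hxa
    rw [AdicCompletion.evalₐ_mk, ← AdicCompletion.Ideal.mk_eq_mk I hmn, Ideal.Quotient.eq]
    exact Ideal.pow_le_pow_right hmn hxa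
  rw [completedFiltration, Ideal.mem_comap, hxa', Ideal.mem_quotient_iff_mem hI]

lemma IsPrimeFiltration.completedFiltration (h𝔟 : IsPrimeFiltration 𝔟)
    (hI : ∀ n, I ^ n ≤ 𝔟 n) : IsPrimeFiltration (completedFiltration I 𝔟) where
  antitone m n hmn x hx := by
    obtain ⟨a, ha⟩ := Ideal.Quotient.mk_surjective (AdicCompletion.evalₐ I n x)
    rw [mem_completedFiltration_iff (hI _) le_rfl ha.symm] at hx
    exact (mem_completedFiltration_iff (hI _) hmn ha.symm).2 (h𝔟.antitone hmn hx)
  ne_top := by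
    rw [Ideal.ne_top_iff_one, mem_completedFiltration_iff (hI 1) le_rfl (a := 1) (by simp)]
    exact (Ideal.ne_top_iff_one _).1 h𝔟.ne_top
  mul_notMem {m n x y} hx hy := by
    obtain ⟨a, ha⟩ := Ideal.Quotient.mk_surjective (AdicCompletion.evalₐ I (m + n) x)
    obtain ⟨b, hb⟩ := Ideal.Quotient.mk_surjective (AdicCompletion.evalₐ I (m + n) y)
    rw [mem_completedFiltration_iff (hI _) (Nat.le_add_right m n) ha.symm] at hx
    rw [mem_completedFiltration_iff (hI _) (Nat.le_add_left n m) hb.symm] at hy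
    rw [mem_completedFiltration_iff (hI _) le_rfl (a := a * b) (by rw [map_mul, map_mul, ha, hb])]
    exact h𝔟.mul_notMem hx hy

end PrimeFiltration

section DecayIdeal

open Filter

variable {ι A : Type*} [CommRing A] {U : Ultrafilter ι} {𝔞 : ι → ℕ → Ideal A} {g g' : ι → ℕ}

/-- The ideal of elements whose order of vanishing with respect to the filtrations `𝔞 k`
eventually exceeds, along the ultrafilter `U`, every multiple of `g k`. -/
def decayIdeal (U : Ultrafilter ι) (𝔞 : ι → ℕ → Ideal A) (g : ι → ℕ) : Ideal A where
  carrier := {a | ∀ C : ℕ, ∀ᶠ k in U, a ∈ 𝔞 k (C * g k)}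
  zero_mem' _ := .of_forall fun _ => zero_mem _
  add_mem' ha hb C := by
    filter_upwards [ha C, hb C] with k hak hbk using add_mem hak hbk
  smul_mem' a _ hb C := by
    filter_upwards [hb C] with k hbk using Ideal.mul_mem_left _ a hbk

lemma mem_decayIdeal {a : A} :
    a ∈ decayIdeal U 𝔞 g ↔ ∀ C : ℕ, ∀ᶠ k in U, a ∈ 𝔞 k (C * g k) := Iff.rfl

lemma decayIdeal_isPrime (h𝔞 : ∀ k, IsPrimeFiltration (𝔞 k)) (hg : ∀ᶠ k in U, 0 < g k) :
    (decayIdeal U 𝔞 g).IsPrime := by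
  refine Ideal.isPrime_iff.2 ⟨fun htop => ?_, fun {x y} hxy => ?_⟩
  · have h_one : ∀ᶠ k in U, 1 ∈ 𝔞 k (1 * g k) := mem_decayIdeal.1 (htop ▸ trivial) 1
    obtain ⟨k, hk, hgk⟩ := (h_one.and hg).exists
    rw [one_mul] at hk
    exact (Ideal.ne_top_iff_one _).1 (h𝔞 k).ne_top ((h𝔞 k).antitone hgk hk)
  · by_contra! hnot
    simp only [mem_decayIdeal, not_forall, ← Ultrafilter.eventually_not] at hnot
    obtain ⟨⟨C, hC⟩, D, hD⟩ := hnot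
    obtain ⟨k, ⟨hxk, hyk⟩, hxyk⟩ := ((hC.and hD).and (hxy (C + D))).exists
    exact (h𝔞 k).mul_notMem hxk hyk (add_mul C D (g k) ▸ hxyk)

lemma decayIdeal_lt_decayIdeal (h𝔞 : ∀ k, Antitone (𝔞 k))
    (hg : ∀ C : ℕ, ∀ᶠ k in U, C * g' k ≤ g k) {a : A} {C : ℕ}
    (ha : ∀ᶠ k in U, a ∈ 𝔞 k (g k)) (ha' : ∀ᶠ k in U, a ∉ 𝔞 k (C * g k)) :
    decayIdeal U 𝔞 g < decayIdeal U 𝔞 g' := by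
  refine SetLike.lt_iff_le_and_exists.2 ⟨fun b hb D => ?_, a, fun D => ?_, fun hmem => ?_⟩
  · filter_upwards [hb D, hg 1] with k hbk hgk
    exact h𝔞 k (Nat.mul_le_mul_left D (by simpa only [one_mul] using hgk)) hbk
  · filter_upwards [ha, hg D] with k hak hgk using h𝔞 k hgk hak
  · obtain ⟨k, hk, hk'⟩ := (ha'.and (hmem C)).exists
    exact hk hk'

end DecayIdeal

section Growth

/-- Integer sequences of exponential growth `r ^ k`; the factor `2` leaves room between
consecutive values. -/
noncomputable def expGrowth (r : ℝ) (k : ℕ) : ℕ := 2 * ⌊r ^ k⌋₊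

variable {r s : ℝ}

lemma two_le_expGrowth (hr : 1 ≤ r) (k : ℕ) : 2 ≤ expGrowth r k := by
  have : 1 ≤ ⌊r ^ k⌋₊ := Nat.le_floor (by simpa using one_le_pow₀ hr)
  unfold expGrowth
  omega

lemma expGrowth_add_two_le (hr : 2 ≤ r) {j k : ℕ} (hjk : j < k) :
    expGrowth r j + 2 ≤ expGrowth r k := by
  have hmono : StrictMono fun k : ℕ => ⌊r ^ k⌋₊ := strictMono_nat_of_lt_succ fun k => by
    have h_one : 1 ≤ r ^ k := one_le_pow₀ (by linarith)
    refine Nat.le_floor ?_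
    calc ((⌊r ^ k⌋₊ + 1 : ℕ) : ℝ) ≤ r ^ k + 1 := by
          push_cast
          gcongr
          exact Nat.floor_le (by positivity)
      _ ≤ r ^ k * 2 := by linarith
      _ ≤ r ^ (k + 1) := by rw [pow_succ]; gcongr
  have : ⌊r ^ j⌋₊ < ⌊r ^ k⌋₊ := hmono hjk
  unfold expGrowth
  omega

lemma expGrowth_le (hr0 : 0 ≤ r) {b : ℕ} (hr : r ≤ b) (k : ℕ) : expGrowth r k ≤ 2 * b ^ k := by
  unfold expGrowth
  gcongr
  exact Nat.floor_le_of_le (by push_cast; gcongr)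

lemma eventually_mul_expGrowth_le (hs : 0 ≤ s) (hsr : s < r) (C : ℕ) :
    ∀ᶠ k in Filter.atTop, C * expGrowth s k ≤ expGrowth r k := by
  have hlittle := (isLittleO_pow_pow_of_lt_left hs hsr).const_mul_left (C : ℝ)
  filter_upwards [hlittle.bound one_pos] with k hk
  have hr : 0 ≤ r := hs.trans hsr.le
  rw [one_mul, Real.norm_of_nonneg (by positivity), Real.norm_of_nonneg (by positivity)] at hk
  have hfloor : C * ⌊s ^ k⌋₊ ≤ ⌊r ^ k⌋₊ := Nat.le_floor <| by
    push_cast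
    exact (mul_le_mul_of_nonneg_left (Nat.floor_le (by positivity)) C.cast_nonneg).trans hk
  unfold expGrowth
  linarith

lemma eight_pow_add_expGrowth_lt (hr0 : 0 ≤ r) (hr : r ≤ 3) {j k : ℕ} (hjk : j < k) :
    8 ^ j + expGrowth r k < 8 ^ k := by
  obtain ⟨i, rfl⟩ := Nat.exists_eq_succ_of_ne_zero (Nat.ne_zero_of_lt hjk)
  have hji : 8 ^ j ≤ 8 ^ i := Nat.pow_le_pow_right (by norm_num) (by omega)
  have h38 : 3 ^ i ≤ 8 ^ i := Nat.pow_le_pow_left (by norm_num) i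
  have hpos : 0 < 8 ^ i := by positivity
  have hgrowth := expGrowth_le (b := 3) hr0 (by exact_mod_cast hr) (i + 1)
  rw [pow_succ] at hgrowth
  rw [Nat.succ_eq_add_one, pow_succ]
  omega

end Growth

section CompatibleRoots

variable {M : Type*} [CommMonoid M] {p : ℕ} {t : ℕ → M}

lemma compatibleRoots_pow (ht : ∀ n, t (n + 1) ^ p = t n) (n i : ℕ) :
    t (n + i) ^ p ^ i = t n := by
  induction i with
  | zero => simp
  | succ i ih => rw [pow_succ', pow_mul, ← add_assoc, ht, ih]

lemma compatibleRoots_pow_eq_pow (ht : ∀ n, t (n + 1) ^ p = t n) {n m n' m' : ℕ}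
    (h : p ^ n' * m = p ^ n * m') : t n ^ m = t n' ^ m' := by
  rw [← compatibleRoots_pow ht n n', ← compatibleRoots_pow ht n' n, ← pow_mul, ← pow_mul, h,
    add_comm n]

lemma exists_natCast_eq_pow_mul_of_mem_pPowRat {q : ℚ} (hq : q ∈ pPowRat p) :
    ∃ n m : ℕ, (p : ℚ) ^ n * q = m := by
  obtain ⟨hq0, n, m, hm⟩ := hq
  have hm0 : (0 : ℚ) ≤ m := hm ▸ by positivity
  lift m to ℕ using by exact_mod_cast hm0
  exact ⟨n, m, by exact_mod_cast hm⟩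

lemma inv_pow_mem_pPowRat (p n : ℕ) : ((p : ℚ) ^ n)⁻¹ ∈ pPowRat p := by
  refine ⟨by positivity, n, ?_⟩
  rcases eq_or_ne ((p : ℚ) ^ n) 0 with h0 | h0
  · exact ⟨0, by simp [h0]⟩
  · exact ⟨1, by simp [h0]⟩

/-- The exponent `1 / p ^ n` of `x ^ (1 / p ^ n)`. -/
def pPowRat.invPow (p n : ℕ) : pPowRat p := ⟨((p : ℚ) ^ n)⁻¹, inv_pow_mem_pPowRat p n⟩

lemma exists_monoidHom_invPow (hp : p ≠ 0) (ht : ∀ n, t (n + 1) ^ p = t n) :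
    ∃ χ : Multiplicative (pPowRat p) →* M,
      ∀ n, χ (Multiplicative.ofAdd (pPowRat.invPow p n)) = t n := by
  choose den num hq using fun q : pPowRat p => exists_natCast_eq_pow_mul_of_mem_pPowRat q.2
  have hpQ : (p : ℚ) ≠ 0 := by exact_mod_cast hp
  have hwd (q : pPowRat p) (n m : ℕ) (h : (p : ℚ) ^ n * q = m) :
      t (den q) ^ num q = t n ^ m :=
    compatibleRoots_pow_eq_pow ht <| by
      have : (p : ℚ) ^ n * num q = p ^ den q * m := by rw [← hq, ← h]; ring
      exact_mod_cast this
  refine ⟨{ toFun := fun q => t (den q.toAdd) ^ num q.toAdd, map_one' := ?_, map_mul' := ?_ }, ?_⟩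
  · simpa using hwd 0 0 0 (by simp)
  · intro a b
    rw [hwd (a * b).toAdd (den a.toAdd + den b.toAdd)
      (p ^ den b.toAdd * num a.toAdd + p ^ den a.toAdd * num b.toAdd), pow_add, pow_mul, pow_mul,
      compatibleRoots_pow ht, add_comm (den a.toAdd), compatibleRoots_pow ht]
    push_cast [toAdd_mul]
    rw [← hq, ← hq]
    ring
  · intro n
    simpa using hwd (pPowRat.invPow p n) n 1 (by simp [pPowRat.invPow, hpQ])

lemma exists_algHom_single_invPow {R S : Type*} [CommSemiring R] [CommSemiring S] [Algebra R S]
    {t : ℕ → S} (hp : p ≠ 0) (ht : ∀ n, t (n + 1) ^ p = t n) (N : ℕ) :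
    ∃ φ : AddMonoidAlgebra R (pPowRat p) →ₐ[R] S,
      ∀ n a, φ (AddMonoidAlgebra.single (pPowRat.invPow p n) a) = a • t n ^ N := by
  obtain ⟨χ, hχ⟩ := exists_monoidHom_invPow hp ht
  refine ⟨AddMonoidAlgebra.lift R S (pPowRat p) (χ ^ N), fun n a => ?_⟩
  rw [AddMonoidAlgebra.lift_single, MonoidHom.pow_apply, hχ]

lemma exists_compatibleRoots_integer {K Γ : Type*} [Field K] [LinearOrderedCommGroupWithZero Γ]
    (v : Valuation K Γ) (hp : p ≠ 0) (hpow : Function.Surjective fun x : K => x ^ p)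
    (π : v.integer) : ∃ t : ℕ → v.integer, t 0 = π ∧ ∀ n, t (n + 1) ^ p = t n := by
  have hroot (x : v.integer) : ∃ y : v.integer, y ^ p = x := by
    obtain ⟨y, hy : y ^ p = x⟩ := hpow x
    have hvy : v y ^ p ≤ 1 := by
      rw [← map_pow, hy]
      exact x.2
    exact ⟨⟨y, (pow_le_one_iff hp).1 hvy⟩, Subtype.ext hy⟩
  choose root hroot using hroot
  exact ⟨fun n => root^[n] π, rfl,
    fun n => (congrArg (· ^ p) (Function.iterate_succ_apply' root n π)).trans (hroot _)⟩

end CompatibleRoots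

section OrderFiltration

variable {O A : Type*} [CommRing O] [CommRing A] [Algebra O A] (π : O) (φ : A →ₐ[O] O)

/-- The filtration of the `π`-adic completion of an `O`-algebra by the order of vanishing in `π`
at the `O`-point `φ`. -/
noncomputable def orderFiltration :
    ℕ → Ideal (AdicCompletion (Ideal.span {algebraMap O A π}) A) :=
  completedFiltration _ fun n => (Ideal.span {π} ^ n).comap (φ : A →+* O)

lemma span_algebraMap_pow_le_comap (n : ℕ) :
    Ideal.span {algebraMap O A π} ^ n ≤ (Ideal.span {π} ^ n).comap (φ : A →+* O) := by
  rw [Ideal.span_singleton_pow, Ideal.span_le, Set.singleton_subset_iff, SetLike.mem_coe,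
    Ideal.mem_comap, map_pow, RingHom.coe_coe, φ.commutes]
  exact Ideal.pow_mem_pow (Ideal.mem_span_singleton_self π) n

variable {π} in
lemma isPrimeFiltration_orderFiltration [IsDomain O] [ValuationRing O] (hπ : ¬IsUnit π) :
    IsPrimeFiltration (orderFiltration π φ) :=
  ((isPrimeFiltration_span_singleton_pow hπ).comap (φ : A →+* O)).completedFiltration
    (span_algebraMap_pow_le_comap π φ)

/-- The sum `∑ a n` in the `I`-adic completion. -/
noncomputable def adicSeries (I : Ideal A) (a : ℕ → A) (ha : ∀ n, a n ∈ I ^ n) :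
    AdicCompletion I A :=
  AdicCompletion.mk I A <|
    AdicCompletion.AdicCauchySequence.mk I A (fun N => ∑ n ∈ Finset.range N, a n) fun N => by
      rw [SModEq.comm, SModEq.sub_mem, smul_eq_mul, Ideal.mul_top, Finset.sum_range_succ,
        add_sub_cancel_left]
      exact ha N

lemma evalₐ_adicSeries (I : Ideal A) (a : ℕ → A) (ha : ∀ n, a n ∈ I ^ n) (N : ℕ) :
    AdicCompletion.evalₐ I N (adicSeries I a ha) =
      Ideal.Quotient.mk (I ^ N) (∑ n ∈ Finset.range N, a n) :=
  AdicCompletion.evalₐ_mk I N _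

variable {π} in
lemma adicSeries_mem_orderFiltration_iff {a : ℕ → A}
    (ha : ∀ n, a n ∈ Ideal.span {algebraMap O A π} ^ n) {m N : ℕ} (hmN : m ≤ N) :
    adicSeries _ a ha ∈ orderFiltration π φ m ↔ π ^ m ∣ ∑ n ∈ Finset.range N, φ (a n) := by
  rw [orderFiltration, mem_completedFiltration_iff (span_algebraMap_pow_le_comap π φ m) hmN
    (evalₐ_adicSeries _ a ha N), Ideal.mem_comap, Ideal.span_singleton_pow,
    Ideal.mem_span_singleton, RingHom.coe_coe, map_sum]

lemma single_pow_mem_span_algebraMap_pow {M : Type*} [AddCommMonoid M] (q : M) {m n : ℕ}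
    (hmn : m ≤ n) :
    AddMonoidAlgebra.single q (π ^ n) ∈
      Ideal.span {algebraMap O (AddMonoidAlgebra O M) π} ^ m := by
  rw [Ideal.span_singleton_pow, Ideal.mem_span_singleton, ← map_pow]
  refine (map_dvd _ (pow_dvd_pow π hmn)).trans ⟨AddMonoidAlgebra.single q 1, ?_⟩
  rw [← Algebra.smul_def, AddMonoidAlgebra.smul_single, smul_eq_mul, mul_one]

end OrderFiltration

section LacunarySeries

variable {p : ℕ} {g d : ℕ → ℕ}

lemma pow_add_two_dvd_lacunary_term {M : Type*} [CommMonoid M] {t : ℕ → M} (hp : 1 < p)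
    (ht : ∀ n, t (n + 1) ^ p = t n) (hg : ∀ ⦃j k⦄, j < k → g j + 2 ≤ g k)
    (hd : ∀ ⦃j k⦄, j < k → d j + g k < d k) {j k : ℕ} (hjk : j ≠ k) :
    t 0 ^ (g k + 2) ∣ t 0 ^ g j * t (d j) ^ p ^ d k := by
  rcases hjk.lt_or_gt with hlt | hgt
  · have hdjk := hd hlt
    have hroot : t (d j) ^ p ^ d j = t 0 := by simpa using compatibleRoots_pow ht 0 (d j)
    have hexp : g k + 2 ≤ p ^ (d k - d j) :=
      (show g k + 2 ≤ d k - d j + 1 by omega).trans (Nat.lt_pow_self hp)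
    have hsplit : p ^ d k = p ^ d j * p ^ (d k - d j) := by
      rw [← pow_add, Nat.add_sub_cancel' (by omega)]
    rw [hsplit, pow_mul, hroot]
    exact (pow_dvd_pow _ hexp).mul_left _
  · exact (pow_dvd_pow _ (hg hgt)).mul_right _

variable {O : Type*} [CommRing O] {t : ℕ → O}

lemma pow_add_two_dvd_lacunary_sum_sub (hp : 1 < p) (ht : ∀ n, t (n + 1) ^ p = t n)
    (hg : ∀ ⦃j k⦄, j < k → g j + 2 ≤ g k) (hd : ∀ ⦃j k⦄, j < k → d j + g k < d k)
    {k N : ℕ} (hk : k < N) :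
    t 0 ^ (g k + 2) ∣
      ∑ j ∈ Finset.range N, t 0 ^ g j * t (d j) ^ p ^ d k - t 0 ^ (g k + 1) := by
  have hroot : t (d k) ^ p ^ d k = t 0 := by simpa using compatibleRoots_pow ht 0 (d k)
  rw [← Finset.add_sum_erase _ _ (Finset.mem_range.2 hk), hroot, ← pow_succ, add_sub_cancel_left]
  exact Finset.dvd_sum fun j hj =>
    pow_add_two_dvd_lacunary_term hp ht hg hd (Finset.ne_of_mem_erase hj)

lemma exists_mem_orderFiltration_notMem_add_two [IsDomain O] (hp : 1 < p)
    (ht : ∀ n, t (n + 1) ^ p = t n) (ht0 : t 0 ≠ 0) (hunit : ¬IsUnit (t 0))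
    (hg : ∀ ⦃j k⦄, j < k → g j + 2 ≤ g k) (hd : ∀ ⦃j k⦄, j < k → d j + g k < d k)
    {φ : ℕ → AddMonoidAlgebra O (pPowRat p) →ₐ[O] O}
    (hφ : ∀ k n a, φ k (AddMonoidAlgebra.single (pPowRat.invPow p n) a) = a • t n ^ p ^ d k) :
    ∃ s : AdicCompletion (Ideal.span {algebraMap O (AddMonoidAlgebra O (pPowRat p)) (t 0)})
        (AddMonoidAlgebra O (pPowRat p)),
      ∀ k, s ∈ orderFiltration (t 0) (φ k) (g k) ∧
        s ∉ orderFiltration (t 0) (φ k) (g k + 2) := by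
  have hmono : StrictMono g := fun j k hjk => (Nat.lt_add_of_pos_right two_pos).trans_le (hg hjk)
  refine ⟨adicSeries _ (fun j => .single (pPowRat.invPow p (d j)) (t 0 ^ g j))
    fun j => single_pow_mem_span_algebraMap_pow _ _ (hmono.le_apply), fun k => ?_⟩
  have hkN : k < g k + 2 := Nat.lt_add_right 1 (Nat.lt_succ_of_le hmono.le_apply)
  have hsum := pow_add_two_dvd_lacunary_sum_sub hp ht hg hd hkN
  rw [adicSeries_mem_orderFiltration_iff _ _ (Nat.le_add_right (g k) 2),
    adicSeries_mem_orderFiltration_iff _ _ le_rfl]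
  simp only [hφ, smul_eq_mul]
  refine ⟨?_, fun hdvd => ?_⟩
  · exact (dvd_iff_dvd_of_dvd_sub ((pow_dvd_pow _ (Nat.le_add_right (g k) 2)).trans hsum)).2
      (pow_dvd_pow _ (Nat.le_succ _))
  · have := (pow_dvd_pow_iff ht0 hunit).1 ((dvd_iff_dvd_of_dvd_sub hsum).1 hdvd)
    omega

end LacunarySeries

theorem integralPerfectoidTateAlgebra_char_p_uncountable_chain_of_primes_general
    {O : Type*} [CommRing O] [IsDomain O] [ValuationRing O] {p : ℕ} (hp : 1 < p)
    {t : ℕ → O} (ht : ∀ n, t (n + 1) ^ p = t n) (ht0 : t 0 ≠ 0) (hunit : ¬IsUnit (t 0)) :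
    ∃ P : Set.Ioo (0 : ℝ) 1 →
        Ideal (AdicCompletion
          (Ideal.span {algebraMap O (AddMonoidAlgebra O (pPowRat p)) (t 0)})
          (AddMonoidAlgebra O (pPowRat p))),
      (∀ l, (P l).IsPrime) ∧ StrictMono P := by
  choose φ hφ using fun k =>
    exists_algHom_single_invPow (R := O) (Nat.ne_zero_of_lt hp) ht (p ^ 8 ^ k)
  have h𝔞 (k : ℕ) := isPrimeFiltration_orderFiltration (φ k) hunit
  let g (l : Set.Ioo (0 : ℝ) 1) : ℕ → ℕ := expGrowth (3 - l)
  have hg_two (l k) : 2 ≤ g l k := two_le_expGrowth (by linarith [l.2.2]) k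
  refine ⟨fun l => decayIdeal (Filter.hyperfilter ℕ) (fun k => orderFiltration (t 0) (φ k)) (g l),
    fun l => decayIdeal_isPrime h𝔞 (.of_forall fun k => two_pos.trans_le (hg_two l k)),
    fun l m hlm => ?_⟩
  obtain ⟨s, hs⟩ := exists_mem_orderFiltration_notMem_add_two hp ht ht0 hunit (g := g l)
    (fun _ _ => expGrowth_add_two_le (by linarith [l.2.2]))
    (fun _ _ => eight_pow_add_expGrowth_lt (by linarith [l.2.2]) (by linarith [l.2.1])) hφ
  have hlittle (C : ℕ) : ∀ᶠ k in Filter.hyperfilter ℕ, C * g m k ≤ g l k :=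
    Nat.hyperfilter_le_atTop <| eventually_mul_expGrowth_le (by linarith [m.2.2])
      (sub_lt_sub_left (Subtype.coe_lt_coe.2 hlm) 3) C
  exact decayIdeal_lt_decayIdeal (C := 2) (fun k => (h𝔞 k).antitone) hlittle
    (.of_forall fun k => (hs k).1) (.of_forall fun k hmem =>
      (hs k).2 ((h𝔞 k).antitone (by linarith [hg_two l k]) hmem))

/-- the integral perfectoid Tate algebra `O_K⟨x^{1/p^∞}⟩` over a perfectoid
field `K` of characteristic `p` has a strictly increasing chain of prime ideals indexed by
the real interval `(0,1)`; in particular it has uncountable Krull dimension. -/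
theorem integralPerfectoidTateAlgebra_char_p_uncountable_chain_of_primes
    (p : ℕ) (hp : p.Prime) (K : Type) [Field K] [CharP K p]
    (v : Valuation K NNReal)
    (hnontriv : ∃ x : K, 0 < v x ∧ v x < 1)
    (hcomplete : ∀ f : ℕ → K,
      (∀ ε : NNReal, 0 < ε → ∃ N : ℕ, ∀ m ≥ N, ∀ n ≥ N, v (f m - f n) < ε) →
      ∃ L : K, ∀ ε : NNReal, 0 < ε → ∃ N : ℕ, ∀ n ≥ N, v (f n - L) < ε)
    (hperf : Function.Bijective (fun x : K => x ^ p))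
    (π : v.integer) (hπ0 : 0 < v (π : K)) (hπ1 : v (π : K) < 1) :
    ∃ P : Set.Ioo (0 : ℝ) 1 →
        Ideal (AdicCompletion
          (Ideal.span {algebraMap v.integer
            (AddMonoidAlgebra v.integer (pPowRat p)) π})
          (AddMonoidAlgebra v.integer (pPowRat p))),
      (∀ l, (P l).IsPrime) ∧
      ∀ l m : Set.Ioo (0 : ℝ) 1, (l : ℝ) < (m : ℝ) → P l < P m := by
  obtain ⟨t, rfl, ht⟩ := exists_compatibleRoots_integer v hp.ne_zero hperf.surjective π
  have hunit : ¬IsUnit (t 0) := Valuation.Integer.not_isUnit_iff_valuation_lt_one.2 hπ1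
  exact (integralPerfectoidTateAlgebra_char_p_uncountable_chain_of_primes_general hp.one_lt ht
    (fun h => hπ0.ne' (by simp [h])) hunit).imp fun _ hP => ⟨hP.1, fun _ _ hlm => hP.2 hlm⟩
end

section
/- Let p be a prime, n ≥ 1 a natural number, and let K be a perfectoid field of characteristic p with ring of integers O_K and pseudo-uniformizer π. Then the n-variable integral perfectoid Tate algebra O_K⟨x_1^{1/p^∞}, …, x_n^{1/p^∞}⟩ — the π-adic completion of the monoid algebra AddMonoidAlgebra O_K (Fin n → M) — admits a family (𝔭_λ)_{λ∈(0,1)} of prime ideals, indexed by the real interval (0,1), with 𝔭_λ ⊊ 𝔭_μ whenever λ < μ; in particular it has uncountable Krull dimension. -/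
set_option synthInstance.maxHeartbeats 1000000
set_option maxHeartbeats 1000000

/-!
Write `w` for the valuation of the coefficients, `c = w(π)` and `δ(m)` for the degree of the
monomial `x ^ m` in one of the variables. For `s ≥ 0`, let `u_s` be the Gauss valuation giving
`x ^ m` the norm `c ^ (s δ(m))`, extended to the `π`-adic completion. For `θ` in `(0, 1)`, the
elements `F` with `u_s(F) ≤ c ^ (N s ^ θ)` for every `N` and almost every `s`, with respect to an
ultrafilter on the slopes `s` converging to `∞`, form a prime ideal: if `F` and `G` lie outside it,
then both are large on a common set of the ultrafilter, and so is `F G` because the `u_s` are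
multiplicative. A larger `θ` asks for faster decay, so these ideals decrease in `θ`, and the chain
is obtained from `θ = 1 - λ`.

Strictness comes from prescribing a Newton polygon. Since `δ` takes dense values, there is a
series `F = ∑ π ^ j x ^ (b_j)` with `δ(b_j)` close to `j ^ (1 - 1 / θ)`, and
`min_j (j + s j ^ (1 - 1 / θ))` is comparable to `s ^ θ`; so `u_s(F)` lies between `c ^ (4 s ^ θ)`
and `c ^ (s ^ θ)`, and `F` belongs to the ideals of all smaller exponents but not to that of `θ`.
-/

open Filter Topology AddMonoidAlgebra
open scoped NNReal

theorem coeff_sum_single_of_injective {R M ι : Type*} [Semiring R] {s : Finset ι} {b : ι → M}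
    (hb : b.Injective) (a : ι → R) {j : ι} (hj : j ∈ s) :
    (∑ i ∈ s, single (b i) (a i)).coeff (b j) = a j := by
  rw [coeff_sum, Finsupp.finsetSum_apply, Finset.sum_eq_single_of_mem j hj fun i _ hij => ?_]
  · simp
  · simp [hb.ne hij]

section WeightedGaussNorm

variable {R M Γ₀ : Type*} [Ring R] [AddMonoid M] [LinearOrderedCommMonoidWithZero Γ₀]

/-- The Gauss norm `sup_m w(f_m) χ(m)` of `f = ∑ f_m x^m` in which the monomial `x^m` has
norm `χ(m)`. -/
noncomputable def weightedGaussNorm (w : Valuation R Γ₀) (χ : Multiplicative M →* Γ₀)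
    (f : R[M]) : Γ₀ :=
  f.coeff.support.sup fun m => w (f.coeff m) * χ (.ofAdd m)

variable {w : Valuation R Γ₀} {χ : Multiplicative M →* Γ₀} {f g : R[M]} {r : Γ₀}

theorem weightedGaussNorm_le_iff :
    weightedGaussNorm w χ f ≤ r ↔ ∀ m, w (f.coeff m) * χ (.ofAdd m) ≤ r := by
  refine Finset.sup_le_iff.trans ⟨fun h m => ?_, fun h m _ => h m⟩
  by_cases hm : m ∈ f.coeff.support
  · exact h m hm
  · simp [Finsupp.notMem_support_iff.mp hm]

theorem weightedGaussNorm_lt_iff (hr : r ≠ 0) :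
    weightedGaussNorm w χ f < r ↔ ∀ m, w (f.coeff m) * χ (.ofAdd m) < r := by
  have hr := zero_lt_iff.mpr hr
  refine (Finset.sup_lt_iff (by rwa [bot_eq_zero])).trans ⟨fun h m => ?_, fun h m _ => h m⟩
  by_cases hm : m ∈ f.coeff.support
  · exact h m hm
  · simpa [Finsupp.notMem_support_iff.mp hm] using hr

theorem le_weightedGaussNorm (f : R[M]) (m : M) :
    w (f.coeff m) * χ (.ofAdd m) ≤ weightedGaussNorm w χ f :=
  weightedGaussNorm_le_iff.mp le_rfl m

variable (w χ) in
@[simp]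
theorem weightedGaussNorm_zero : weightedGaussNorm w χ (0 : R[M]) = 0 := by
  simp [weightedGaussNorm, bot_eq_zero]

theorem weightedGaussNorm_add_le_max (f g : R[M]) :
    weightedGaussNorm w χ (f + g) ≤ max (weightedGaussNorm w χ f) (weightedGaussNorm w χ g) := by
  refine weightedGaussNorm_le_iff.mpr fun m => ?_
  calc w ((f + g).coeff m) * χ (.ofAdd m)
      ≤ max (w (f.coeff m)) (w (g.coeff m)) * χ (.ofAdd m) := by
        gcongr
        exact w.map_add _ _
    _ = max (w (f.coeff m) * χ (.ofAdd m)) (w (g.coeff m) * χ (.ofAdd m)) :=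
        (max_mul_mul_right _ _ _).symm
    _ ≤ _ := max_le_max (le_weightedGaussNorm f m) (le_weightedGaussNorm g m)

theorem weightedGaussNorm_sum_le {ι : Type*} {s : Finset ι} {F : ι → R[M]}
    (h : ∀ i ∈ s, weightedGaussNorm w χ (F i) ≤ r) : weightedGaussNorm w χ (∑ i ∈ s, F i) ≤ r :=
  Finset.sum_induction F (weightedGaussNorm w χ · ≤ r)
    (fun f g hf hg => (weightedGaussNorm_add_le_max f g).trans (max_le hf hg)) (by simp) h

theorem weightedGaussNorm_single (m : M) (a : R) :
    weightedGaussNorm w χ (single m a) = w a * χ (.ofAdd m) := by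
  classical
  refine le_antisymm (weightedGaussNorm_le_iff.mpr fun m' => ?_) ?_
  · rw [coeff_single, Finsupp.single_apply]
    split_ifs with h
    · rw [h]
    · simp
  · simpa using le_weightedGaussNorm (w := w) (χ := χ) (single m a) m

theorem weightedGaussNorm_mul_le (f g : R[M]) :
    weightedGaussNorm w χ (f * g) ≤ weightedGaussNorm w χ f * weightedGaussNorm w χ g := by
  rw [mul_def]
  refine weightedGaussNorm_sum_le fun a _ => weightedGaussNorm_sum_le fun b _ => ?_
  rw [weightedGaussNorm_single, ofAdd_add, map_mul, map_mul, mul_mul_mul_comm]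
  exact mul_le_mul' (le_weightedGaussNorm f a) (le_weightedGaussNorm g b)

open Classical in
variable (w χ) in
/-- The part of `f` made of the terms of maximal norm. -/
noncomputable def gaussInitialForm (f : R[M]) : R[M] :=
  ofCoeff <| f.coeff.filter fun m => w (f.coeff m) * χ (.ofAdd m) = weightedGaussNorm w χ f

theorem eq_weightedGaussNorm_of_mem_support_gaussInitialForm {m : M}
    (hm : m ∈ (gaussInitialForm w χ f).coeff.support) :
    w ((gaussInitialForm w χ f).coeff m) * χ (.ofAdd m) = weightedGaussNorm w χ f := by
  classical
  rw [gaussInitialForm, coeff_ofCoeff, Finsupp.support_filter, Finset.mem_filter] at hm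
  rw [gaussInitialForm, coeff_ofCoeff, Finsupp.filter_apply, if_pos hm.2, hm.2]

theorem support_gaussInitialForm_nonempty (hf : weightedGaussNorm w χ f ≠ 0) :
    (gaussInitialForm w χ f).coeff.support.Nonempty := by
  classical
  have hsupp : f.coeff.support.Nonempty := by
    rw [Finset.nonempty_iff_ne_empty]
    intro h
    exact hf (by simp [weightedGaussNorm, h, bot_eq_zero])
  obtain ⟨m, hm, hmax⟩ :=
    Finset.exists_mem_eq_sup _ hsupp fun m => w (f.coeff m) * χ (.ofAdd m)
  refine ⟨m, ?_⟩
  rw [gaussInitialForm, coeff_ofCoeff, Finsupp.support_filter]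
  exact Finset.mem_filter.mpr ⟨hm, hmax.symm⟩

theorem weightedGaussNorm_gaussInitialForm_le (f : R[M]) :
    weightedGaussNorm w χ (gaussInitialForm w χ f) ≤ weightedGaussNorm w χ f :=
  Finset.sup_le fun _ hm => (eq_weightedGaussNorm_of_mem_support_gaussInitialForm hm).le

theorem weightedGaussNorm_gaussInitialForm_sub_lt (hf : weightedGaussNorm w χ f ≠ 0) :
    weightedGaussNorm w χ (gaussInitialForm w χ f - f) < weightedGaussNorm w χ f := by
  classical
  refine (weightedGaussNorm_lt_iff hf).mpr fun m => ?_
  rw [gaussInitialForm, coeff_sub, coeff_ofCoeff, Finsupp.sub_apply, Finsupp.filter_apply]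
  split_ifs with hm
  · simpa using zero_lt_iff.mpr hf
  · rw [zero_sub, Valuation.map_neg]
    exact (le_weightedGaussNorm f m).lt_of_ne hm

theorem mul_le_weightedGaussNorm_mul_gaussInitialForm [UniqueSums M]
    (hf : weightedGaussNorm w χ f ≠ 0) (hg : weightedGaussNorm w χ g ≠ 0) :
    weightedGaussNorm w χ f * weightedGaussNorm w χ g ≤
      weightedGaussNorm w χ (gaussInitialForm w χ f * gaussInitialForm w χ g) := by
  obtain ⟨a, ha, b, hb, hab⟩ := UniqueSums.uniqueAdd_of_nonempty
    (support_gaussInitialForm_nonempty hf) (support_gaussInitialForm_nonempty hg)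
  refine le_of_eq_of_le ?_ (le_weightedGaussNorm _ (a + b))
  rw [coeff_mul_add_of_uniqueAdd hab, ofAdd_add, map_mul, map_mul, mul_mul_mul_comm,
    eq_weightedGaussNorm_of_mem_support_gaussInitialForm ha,
    eq_weightedGaussNorm_of_mem_support_gaussInitialForm hb]

theorem weightedGaussNorm_mul [UniqueSums M] (f g : R[M]) :
    weightedGaussNorm w χ (f * g) = weightedGaussNorm w χ f * weightedGaussNorm w χ g := by
  refine (weightedGaussNorm_mul_le f g).antisymm ?_
  obtain hf | hf := eq_or_ne (weightedGaussNorm w χ f) 0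
  · simp [hf]
  obtain hg | hg := eq_or_ne (weightedGaussNorm w χ g) 0
  · simp [hg]
  by_contra! hlt
  have hleft : weightedGaussNorm w χ ((gaussInitialForm w χ f - f) * g) <
      weightedGaussNorm w χ f * weightedGaussNorm w χ g :=
    (weightedGaussNorm_mul_le _ _).trans_lt <| mul_lt_mul_of_pos_right
      (weightedGaussNorm_gaussInitialForm_sub_lt hf) (zero_lt_iff.mpr hg)
  have hright : weightedGaussNorm w χ (gaussInitialForm w χ f * (gaussInitialForm w χ g - g)) <
      weightedGaussNorm w χ f * weightedGaussNorm w χ g :=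
    (weightedGaussNorm_mul_le _ _).trans_lt <|
      (mul_le_mul_left (weightedGaussNorm_gaussInitialForm_le f) _).trans_lt <|
      mul_lt_mul_of_pos_left (weightedGaussNorm_gaussInitialForm_sub_lt hg) (zero_lt_iff.mpr hf)
  have hsplit : gaussInitialForm w χ f * gaussInitialForm w χ g =
      f * g + ((gaussInitialForm w χ f - f) * g +
        gaussInitialForm w χ f * (gaussInitialForm w χ g - g)) := by
    noncomm_ring
  refine (mul_le_weightedGaussNorm_mul_gaussInitialForm hf hg).not_gt ?_
  rw [hsplit]
  exact (weightedGaussNorm_add_le_max _ _).trans_lt <| max_lt hlt <|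
    (weightedGaussNorm_add_le_max _ _).trans_lt <| max_lt hleft hright

variable (w χ) in
/-- The weighted Gauss norm as a valuation on the monoid algebra. -/
noncomputable def weightedGaussValuation [UniqueSums M] : Valuation R[M] Γ₀ where
  toFun := weightedGaussNorm w χ
  map_zero' := weightedGaussNorm_zero w χ
  map_one' := by simp [one_def, weightedGaussNorm_single]
  map_mul' := weightedGaussNorm_mul
  map_add_le_max' := weightedGaussNorm_add_le_max

end WeightedGaussNorm

section AdicExtension

variable {A : Type*} [CommRing A] {I : Ideal A} {w : Valuation A ℝ≥0} {c : ℝ≥0}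

theorem dist_valuation_le (w : Valuation A ℝ≥0) (x y : A) : dist (w x) (w y) ≤ w (x - y) := by
  have hsub (a b : A) : (w a : ℝ) - w b ≤ w (a - b) := by
    have h : w a ≤ w (a - b) + w b := by
      simpa using (w.map_add (a - b) b).trans (max_le_add_of_nonneg zero_le zero_le)
    exact sub_le_iff_le_add.mpr (by exact_mod_cast h)
  rw [NNReal.dist_eq, abs_sub_le_iff]
  exact ⟨hsub x y, w.map_sub_swap y x ▸ hsub y x⟩

theorem exists_tendsto_valuation_of_mk_eq (hc : c < 1) (hw : ∀ m, ∀ x ∈ I ^ m, w x ≤ c ^ m)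
    (F : AdicCompletion I A) :
    ∃ r : ℝ≥0, ∀ a : AdicCompletion.AdicCauchySequence I A, AdicCompletion.mk I A a = F →
      Tendsto (fun m => w (a m)) atTop (𝓝 r) := by
  obtain ⟨a, rfl⟩ := AdicCompletion.mk_surjective I A F
  have hdist {x y : A} {m : ℕ} (h : x - y ∈ I ^ m) : dist (w x) (w y) ≤ (c : ℝ) ^ m :=
    (dist_valuation_le w x y).trans (by exact_mod_cast hw m _ h)
  have hcauchy : CauchySeq fun m => w (a m) := by
    refine cauchySeq_of_le_geometric c 1 (by exact_mod_cast hc) fun m => ?_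
    rw [one_mul]
    exact hdist (by simpa using SModEq.sub_mem.mp (a.2 m.le_succ))
  obtain ⟨r, hr⟩ := cauchySeq_tendsto_of_complete hcauchy
  refine ⟨r, fun b hb => tendsto_of_tendsto_of_dist hr ?_⟩
  refine squeeze_zero (fun _ => dist_nonneg) (fun m => hdist (m := m) ?_)
    (tendsto_pow_atTop_nhds_zero_of_lt_one c.2 (by exact_mod_cast hc))
  have h := congrArg (AdicCompletion.evalₐ I m) hb
  rw [AdicCompletion.evalₐ_mk, AdicCompletion.evalₐ_mk] at h
  exact Ideal.Quotient.eq.mp h.symm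

/-- The extension of a valuation to the `I`-adic completion by continuity. -/
noncomputable def adicExtension (hc : c < 1) (hw : ∀ m, ∀ x ∈ I ^ m, w x ≤ c ^ m) :
    Valuation (AdicCompletion I A) ℝ≥0 :=
  have hlim (a : AdicCompletion.AdicCauchySequence I A) :=
    (exists_tendsto_valuation_of_mk_eq hc hw (AdicCompletion.mk I A a)).choose_spec
  { toFun F := (exists_tendsto_valuation_of_mk_eq hc hw F).choose
    map_zero' := tendsto_nhds_unique (hlim 0 0 rfl) (by simp)
    map_one' := tendsto_nhds_unique (hlim 1 1 rfl) (by simp)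
    map_mul' F G := by
      obtain ⟨a, rfl⟩ := AdicCompletion.mk_surjective I A F
      obtain ⟨b, rfl⟩ := AdicCompletion.mk_surjective I A G
      refine tendsto_nhds_unique (hlim (a * b) (a * b) rfl) ?_
      simpa using (hlim a a rfl).mul (hlim b b rfl)
    map_add_le_max' F G := by
      obtain ⟨a, rfl⟩ := AdicCompletion.mk_surjective I A F
      obtain ⟨b, rfl⟩ := AdicCompletion.mk_surjective I A G
      exact le_of_tendsto_of_tendsto' (hlim (a + b) (a + b) rfl)
        ((hlim a a rfl).max (hlim b b rfl)) fun m => w.map_add (a m) (b m) }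

theorem tendsto_adicExtension (hc : c < 1) (hw : ∀ m, ∀ x ∈ I ^ m, w x ≤ c ^ m)
    (a : AdicCompletion.AdicCauchySequence I A) :
    Tendsto (fun m => w (a m)) atTop (𝓝 (adicExtension hc hw (AdicCompletion.mk I A a))) :=
  (exists_tendsto_valuation_of_mk_eq hc hw (AdicCompletion.mk I A a)).choose_spec a rfl

theorem adicExtension_le_one (hc : c < 1) (hw : ∀ m, ∀ x ∈ I ^ m, w x ≤ c ^ m)
    (F : AdicCompletion I A) : adicExtension hc hw F ≤ 1 := by
  obtain ⟨a, rfl⟩ := AdicCompletion.mk_surjective I A F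
  exact le_of_tendsto' (tendsto_adicExtension hc hw a) fun m => by simpa using hw 0 (a m) (by simp)

/-- The sum in the `I`-adic completion of a series whose `j`-th term lies in `I ^ j`. -/
noncomputable def adicSum (T : ℕ → A) (hT : ∀ j, T j ∈ I ^ j) : AdicCompletion I A :=
  AdicCompletion.mk I A <| .mk I A (fun m => ∑ j ∈ Finset.range m, T j) fun m => by
    rw [SModEq.comm, SModEq.sub_mem, Finset.sum_range_succ_sub_sum]
    simpa using hT m

theorem tendsto_adicExtension_adicSum (hc : c < 1) (hw : ∀ m, ∀ x ∈ I ^ m, w x ≤ c ^ m)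
    {T : ℕ → A} (hT : ∀ j, T j ∈ I ^ j) :
    Tendsto (fun m => w (∑ j ∈ Finset.range m, T j)) atTop
      (𝓝 (adicExtension hc hw (adicSum T hT))) :=
  tendsto_adicExtension hc hw _

end AdicExtension

section RapidDecay

variable {α B Γ₀ : Type*} [CommRing B] [LinearOrderedCommMonoidWithZero Γ₀]
  {u : α → Valuation B Γ₀} {g g' : α → Γ₀}

/-- The ideal of those `x` for which `u s x` is, along the filter `l`, eventually smaller than
every power of the gauge `g s`. -/
def rapidDecayIdeal (hu : ∀ s x, u s x ≤ 1) (g : α → Γ₀) (l : Filter α) : Ideal B where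
  carrier := {x | ∀ N : ℕ, ∀ᶠ s in l, u s x ≤ g s ^ N}
  zero_mem' N := by simp
  add_mem' hx hy N := by
    filter_upwards [hx N, hy N] with s hxs hys
    exact (u s).map_add_le hxs hys
  smul_mem' r x hx N := by
    filter_upwards [hx N] with s hxs
    rw [smul_eq_mul, map_mul]
    exact (mul_le_of_le_one_left' (hu s r)).trans hxs

variable {hu : ∀ s x, u s x ≤ 1}

theorem mem_rapidDecayIdeal {l : Filter α} {x : B} :
    x ∈ rapidDecayIdeal hu g l ↔ ∀ N : ℕ, ∀ᶠ s in l, u s x ≤ g s ^ N :=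
  Iff.rfl

theorem rapidDecayIdeal_isPrime {U : Ultrafilter α} (hg : ∀ᶠ s in U, g s < 1) :
    (rapidDecayIdeal hu g U).IsPrime := by
  refine Ideal.isPrime_iff.mpr ⟨(Ideal.ne_top_iff_one _).mpr fun h => ?_, fun {x y} hxy => ?_⟩
  · obtain ⟨s, hs, hgs⟩ := ((h 1).and hg).exists
    rw [map_one, pow_one] at hs
    exact hs.not_gt hgs
  · by_contra! h
    simp only [mem_rapidDecayIdeal, not_forall, ← Ultrafilter.eventually_not, not_le] at h
    obtain ⟨⟨N, hN⟩, ⟨N', hN'⟩⟩ := h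
    obtain ⟨s, hs, hx, hy⟩ := ((hxy (N + N')).and (hN.and hN')).exists
    rw [map_mul, pow_add] at hs
    exact (mul_lt_mul'' hx hy zero_le zero_le).not_ge hs

theorem rapidDecayIdeal_mono {l : Filter α} (h : ∀ᶠ s in l, g s ≤ g' s) :
    rapidDecayIdeal hu g l ≤ rapidDecayIdeal hu g' l := fun x hx N => by
  filter_upwards [hx N, h] with s hxs hs
  exact hxs.trans (pow_le_pow_left' hs N)

theorem notMem_rapidDecayIdeal {l : Filter α} [l.NeBot] {x : B} {k : ℕ}
    (hg0 : ∀ᶠ s in l, 0 < g s) (hg1 : ∀ᶠ s in l, g s < 1) (hx : ∀ᶠ s in l, g s ^ k ≤ u s x) :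
    x ∉ rapidDecayIdeal hu g l := fun h => by
  obtain ⟨s, hs, hs0, hs1, hxs⟩ := ((h (k + 1)).and (hg0.and (hg1.and hx))).exists
  exact (hxs.trans hs).not_gt (pow_lt_pow_right_of_lt_one₀ hs0 hs1 k.lt_succ_self)

end RapidDecay

section RpowCharacter

variable {R M : Type*} [Ring R] [AddMonoid M] {w : Valuation R ℝ≥0} {c : ℝ≥0} {δ : M →+ ℝ≥0}

/-- The character `m ↦ c ^ δ(m)` of `M`, written multiplicatively. -/
noncomputable def rpowCharacter (c : ℝ≥0) (δ : M →+ ℝ≥0) : Multiplicative M →* ℝ≥0 where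
  toFun m := c ^ (δ m.toAdd : ℝ)
  map_one' := by simp
  map_mul' m m' := by simp [NNReal.rpow_add_of_nonneg]

theorem rpowCharacter_ofAdd (m : M) : rpowCharacter c δ (.ofAdd m) = c ^ (δ m : ℝ) :=
  rfl

theorem weightedGaussNorm_rpowCharacter_le_one (hw : ∀ r, w r ≤ 1) (hc : c ≤ 1) (f : R[M]) :
    weightedGaussNorm w (rpowCharacter c δ) f ≤ 1 :=
  weightedGaussNorm_le_iff.mpr fun _ => mul_le_one' (hw _) (NNReal.rpow_le_one hc (δ _).2)

end RpowCharacter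

section CompletedMonoidAlgebra

variable {R M : Type*} [CommRing R] [AddCommMonoid M] {w : Valuation R ℝ≥0} {π : R} {δ : M →+ ℝ≥0}

theorem weightedGaussNorm_rpowCharacter_le_pow (hw : ∀ r, w r ≤ 1) (hπ : w π ≤ 1) (m : ℕ) {f : R[M]}
    (hf : f ∈ Ideal.span {algebraMap R R[M] π} ^ m) :
    weightedGaussNorm w (rpowCharacter (w π) δ) f ≤ w π ^ m := by
  rw [Ideal.span_singleton_pow, Ideal.mem_span_singleton] at hf
  obtain ⟨g, rfl⟩ := hf
  refine (weightedGaussNorm_mul_le _ _).trans ?_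
  refine mul_le_of_le_of_le_one (le_of_eq ?_)
    (weightedGaussNorm_rpowCharacter_le_one hw hπ g)
  rw [← map_pow, coe_algebraMap, Function.comp_apply, weightedGaussNorm_single]
  simp

variable (M π) in
/-- The `π`-adic completion of the monoid algebra `R[M]`. -/
abbrev CompletedMonoidAlgebra : Type _ :=
  AdicCompletion (Ideal.span {algebraMap R R[M] π}) R[M]

theorem single_pow_mem_span_algebraMap_pow_s4 (m : M) {j k : ℕ} (h : j ≤ k) :
    single m (π ^ k) ∈ Ideal.span {algebraMap R R[M] π} ^ j := by
  rw [Ideal.span_singleton_pow, Ideal.mem_span_singleton]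
  refine (pow_dvd_pow _ h).trans ⟨single m 1, ?_⟩
  rw [← map_pow, coe_algebraMap, Function.comp_apply, single_mul_single]
  simp

/-- The series `∑ π ^ (j + 2) x ^ b(j)`. It starts at `π ^ 2` because `δ(b j)` will be chosen
between `(j + 2) ^ q` and `(j + 1) ^ q` with `q < 0`, and the second base must be positive too. -/
noncomputable def monomialSeries (π : R) (b : ℕ → M) : CompletedMonoidAlgebra M π :=
  adicSum (fun j => single (b j) (π ^ (j + 2))) fun j =>
    single_pow_mem_span_algebraMap_pow_s4 (b j) (by lia)

variable [UniqueSums M] (hw : ∀ r, w r ≤ 1) (hπ : w π < 1)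

/-- The extension to the `π`-adic completion of the Gauss valuation giving `x ^ m` the norm
`w(π) ^ δ(m)`. -/
noncomputable def completedGaussValuation (δ : M →+ ℝ≥0) :
    Valuation (CompletedMonoidAlgebra M π) ℝ≥0 :=
  adicExtension (w := weightedGaussValuation w (rpowCharacter (w π) δ)) hπ
    fun m _ => weightedGaussNorm_rpowCharacter_le_pow hw hπ.le m

theorem tendsto_completedGaussValuation_monomialSeries (δ : M →+ ℝ≥0) (b : ℕ → M) :
    Tendsto (fun m => weightedGaussNorm w (rpowCharacter (w π) δ)
        (∑ j ∈ Finset.range m, single (b j) (π ^ (j + 2))))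
      atTop (𝓝 (completedGaussValuation hw hπ δ (monomialSeries π b))) :=
  tendsto_adicExtension_adicSum hπ _ _

theorem completedGaussValuation_monomialSeries_le {b : ℕ → M} {r : ℝ} (hπ0 : 0 < w π)
    (h : ∀ j, r ≤ (j + 2 : ℕ) + δ (b j)) :
    completedGaussValuation hw hπ δ (monomialSeries π b) ≤ w π ^ r := by
  refine le_of_tendsto' (tendsto_completedGaussValuation_monomialSeries hw hπ δ b) fun m =>
    weightedGaussNorm_sum_le fun j _ => ?_
  rw [weightedGaussNorm_single, rpowCharacter_ofAdd, map_pow, ← NNReal.rpow_natCast,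
    ← NNReal.rpow_add hπ0.ne']
  exact NNReal.rpow_le_rpow_of_exponent_ge hπ0 hπ.le (h j)

theorem le_completedGaussValuation_monomialSeries {b : ℕ → M} (hb : b.Injective) {r : ℝ}
    (hπ0 : 0 < w π) {j : ℕ} (h : (j + 2 : ℕ) + δ (b j) ≤ r) :
    w π ^ r ≤ completedGaussValuation hw hπ δ (monomialSeries π b) := by
  refine ge_of_tendsto (tendsto_completedGaussValuation_monomialSeries hw hπ δ b) ?_
  filter_upwards [eventually_gt_atTop j] with m hm
  refine le_trans ?_ (le_weightedGaussNorm _ (b j))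
  rw [coeff_sum_single_of_injective hb _ (Finset.mem_range.mpr hm), rpowCharacter_ofAdd, map_pow,
    ← NNReal.rpow_natCast, ← NNReal.rpow_add hπ0.ne']
  exact NNReal.rpow_le_rpow_of_exponent_ge hπ0 hπ.le h

end CompletedMonoidAlgebra

section PowerGauge

variable {θ s x : ℝ}

theorem rpow_le_add_mul_rpow_one_sub_inv (hθ0 : 0 < θ) (hθ1 : θ < 1) (hs : 0 ≤ s) (hx : 0 < x) :
    s ^ θ ≤ x + s * x ^ (1 - θ⁻¹) := by
  have hterm : 0 ≤ s * x ^ (1 - θ⁻¹) := by positivity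
  calc s ^ θ = x ^ (1 - θ) * (s * x ^ (1 - θ⁻¹)) ^ θ := by
        rw [Real.mul_rpow hs (by positivity), ← Real.rpow_mul hx.le, mul_left_comm,
          ← Real.rpow_add hx, sub_mul, inv_mul_cancel₀ hθ0.ne']
        simp
    _ ≤ (1 - θ) * x + θ * (s * x ^ (1 - θ⁻¹)) :=
        Real.geom_mean_le_arith_mean2_weighted (by linarith) hθ0.le hx.le hterm (by ring)
    _ ≤ x + s * x ^ (1 - θ⁻¹) :=
        add_le_add (mul_le_of_le_one_left hx.le (by linarith))
          (mul_le_of_le_one_left hterm hθ1.le)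

theorem mul_rpow_one_sub_inv_le_rpow (hθ0 : 0 < θ) (hθ1 : θ < 1) (hs : 0 < s) (hx : s ^ θ ≤ x) :
    s * x ^ (1 - θ⁻¹) ≤ s ^ θ :=
  calc s * x ^ (1 - θ⁻¹) ≤ s * (s ^ θ) ^ (1 - θ⁻¹) := by
        gcongr ?_ * ?_
        exact Real.rpow_le_rpow_of_nonpos (by positivity) hx
          (sub_nonpos.mpr ((one_le_inv₀ hθ0).mpr hθ1.le))
    _ = s ^ θ := by
        rw [← Real.rpow_mul hs.le, mul_sub, mul_inv_cancel₀ hθ0.ne', mul_one,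
          ← Real.rpow_one_add' hs.le (by simpa using hθ0.ne'), add_sub_cancel]

/-- The gauge `s ↦ c ^ (s ^ θ)`, whose decay exponent `θ` separates the primes of the chain. -/
noncomputable def powerGauge (c : ℝ≥0) (θ : ℝ) (s : ℝ≥0) : ℝ≥0 :=
  c ^ ((s : ℝ) ^ θ)

variable {c : ℝ≥0}

theorem powerGauge_pos (hc : 0 < c) (θ : ℝ) (s : ℝ≥0) : 0 < powerGauge c θ s :=
  NNReal.rpow_pos hc

theorem powerGauge_lt_one (hc : c < 1) (θ : ℝ) {s : ℝ≥0} (hs : 0 < s) : powerGauge c θ s < 1 :=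
  NNReal.rpow_lt_one hc (Real.rpow_pos_of_pos hs θ)

theorem powerGauge_pow (c : ℝ≥0) (θ : ℝ) (s : ℝ≥0) (N : ℕ) :
    powerGauge c θ s ^ N = c ^ (N * (s : ℝ) ^ θ) := by
  rw [powerGauge, ← NNReal.rpow_mul_natCast, mul_comm]

theorem eventually_powerGauge_le_pow (hc0 : 0 < c) (hc1 : c ≤ 1) {θ θ' : ℝ} (h : θ < θ') (N : ℕ) :
    ∀ᶠ s in atTop, powerGauge c θ' s ≤ powerGauge c θ s ^ N := by
  filter_upwards [(NNReal.tendsto_rpow_atTop (sub_pos.mpr h)).eventually_ge_atTop (N : ℝ≥0),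
    eventually_gt_atTop 0] with s hs hs0
  rw [powerGauge_pow]
  refine NNReal.rpow_le_rpow_of_exponent_ge hc0 hc1 ?_
  calc N * (s : ℝ) ^ θ ≤ (s : ℝ) ^ (θ' - θ) * (s : ℝ) ^ θ := by
        gcongr
        exact_mod_cast hs
    _ = (s : ℝ) ^ θ' := by rw [← Real.rpow_add (NNReal.coe_pos.mpr hs0), sub_add_cancel]

end PowerGauge

section PowerGaugeSeries

theorem exists_seq_between_rpow {M : Type*} {δ : M → ℝ≥0} (hδ : DenseRange δ) {q : ℝ}
    (hq : q < 0) :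
    ∃ b : ℕ → M, ∀ j : ℕ, ((j + 2 : ℕ) : ℝ) ^ q < δ (b j) ∧ δ (b j) < ((j + 1 : ℕ) : ℝ) ^ q := by
  have hlt (j : ℕ) : ((j + 2 : ℕ) : ℝ≥0) ^ q < ((j + 1 : ℕ) : ℝ≥0) ^ q :=
    NNReal.rpow_lt_rpow_of_neg (by positivity) (by norm_cast; lia) hq
  choose x hx hxlt using fun j => hδ.exists_between (hlt j)
  choose b hb using hx
  exact ⟨b, fun j => by rw [hb]; exact_mod_cast hxlt j⟩

variable {R M : Type*} [CommRing R] [AddCommMonoid M] [UniqueSums M] {w : Valuation R ℝ≥0}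
  {π : R} {δ : M →+ ℝ≥0} {θ : ℝ}

theorem exists_powerGauge_pow_le_completedGaussValuation_le (hw : ∀ r, w r ≤ 1) (hπ0 : 0 < w π)
    (hπ1 : w π < 1) (hδ : DenseRange δ) (hθ0 : 0 < θ) (hθ1 : θ < 1) :
    ∃ F : CompletedMonoidAlgebra M π, ∀ s : ℝ≥0, 1 ≤ s →
      powerGauge (w π) θ s ^ 4 ≤ completedGaussValuation hw hπ1 (s • δ) F ∧
        completedGaussValuation hw hπ1 (s • δ) F ≤ powerGauge (w π) θ s := by
  obtain ⟨b, hb⟩ := exists_seq_between_rpow hδ (sub_neg.mpr ((one_lt_inv₀ hθ0).mpr hθ1))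
  have hanti : StrictAnti (δ ∘ b) := strictAnti_nat_of_succ_lt fun j => by
    exact_mod_cast (hb (j + 1)).2.trans (hb j).1
  refine ⟨monomialSeries π b, fun s hs => ⟨?_, ?_⟩⟩
  · have hs1 : (1 : ℝ) ≤ s := by exact_mod_cast hs
    have hsθ : 1 ≤ (s : ℝ) ^ θ := Real.one_le_rpow hs1 hθ0.le
    rw [powerGauge_pow]
    refine le_completedGaussValuation_monomialSeries hw hπ1 hanti.injective.of_comp hπ0
      (j := ⌊(s : ℝ) ^ θ⌋₊) ?_
    have hfloor := Nat.floor_le (zero_le_one.trans hsθ)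
    have hslope : (s : ℝ) * δ (b ⌊(s : ℝ) ^ θ⌋₊) ≤ (s : ℝ) ^ θ :=
      (mul_le_mul_of_nonneg_left (hb _).2.le s.2).trans <|
        mul_rpow_one_sub_inv_le_rpow hθ0 hθ1 (zero_lt_one.trans_le hs1) (by
          exact_mod_cast (Nat.lt_floor_add_one ((s : ℝ) ^ θ)).le)
    rw [AddMonoidHom.smul_apply, smul_eq_mul, NNReal.coe_mul]
    push_cast
    calc (⌊(s : ℝ) ^ θ⌋₊ : ℝ) + 2 + s * δ (b ⌊(s : ℝ) ^ θ⌋₊) ≤ (s : ℝ) ^ θ + 2 + (s : ℝ) ^ θ := by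
          gcongr
      _ ≤ 4 * (s : ℝ) ^ θ := by linarith
  · refine completedGaussValuation_monomialSeries_le hw hπ1 hπ0 fun j => ?_
    rw [AddMonoidHom.smul_apply, smul_eq_mul, NNReal.coe_mul]
    calc (s : ℝ) ^ θ ≤ (j + 2 : ℕ) + s * ((j + 2 : ℕ) : ℝ) ^ (1 - θ⁻¹) :=
          rpow_le_add_mul_rpow_one_sub_inv hθ0 hθ1 s.2 (by positivity)
      _ ≤ (j + 2 : ℕ) + s * δ (b j) := by
          gcongr
          exact (hb j).1.le

end PowerGaugeSeries

section Exponents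

theorem denseRange_of_forall_exists_pos_lt {M : Type*} [AddMonoid M] {δ : M →+ ℝ≥0}
    (h : ∀ ε > 0, ∃ m, 0 < δ m ∧ δ m < ε) : DenseRange δ := by
  refine dense_of_exists_between fun x y hxy => ?_
  obtain ⟨m, hm0, hm⟩ := h (y - x) (tsub_pos_of_lt hxy)
  refine ⟨_, ⟨(⌊x / δ m⌋₊ + 1) • m, rfl⟩, ?_, ?_⟩
  · rw [map_nsmul, nsmul_eq_mul, Nat.cast_succ, ← div_lt_iff₀ hm0]
    exact Nat.lt_floor_add_one _
  · calc δ ((⌊x / δ m⌋₊ + 1) • m) = ⌊x / δ m⌋₊ * δ m + δ m := by simp [add_mul]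
      _ ≤ x + δ m := by
        gcongr
        exact (le_div_iff₀ hm0).mp (Nat.floor_le zero_le)
      _ < y := lt_tsub_iff_left.mp hm

namespace pPowRat

variable {p : ℕ}

theorem inv_pow_mem (p e : ℕ) : ((p : ℚ) ^ e)⁻¹ ∈ pPowRat p := by
  obtain h | h := eq_or_ne ((p : ℚ) ^ e) 0
  · simp [h]
  · exact ⟨by positivity, e, 1, by simp [h]⟩

theorem cast_real_nonneg (q : pPowRat p) : 0 ≤ ((q : ℚ) : ℝ) := by
  exact_mod_cast q.2.1

/-- The inclusion of the exponents into the nonnegative reals. -/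
noncomputable def toNNReal (p : ℕ) : pPowRat p →+ ℝ≥0 where
  toFun q := ((q : ℚ) : ℝ).toNNReal
  map_zero' := by simp
  map_add' q q' := by
    rw [← Real.toNNReal_add (cast_real_nonneg q) (cast_real_nonneg q')]
    simp

theorem toNNReal_inv_pow (p e : ℕ) : toNNReal p ⟨_, inv_pow_mem p e⟩ = (p : ℝ≥0)⁻¹ ^ e := by
  simp [toNNReal, Real.toNNReal_pow, Real.toNNReal_inv]

theorem denseRange_toNNReal (hp : 1 < p) : DenseRange (toNNReal p) := by
  refine denseRange_of_forall_exists_pos_lt fun ε hε => ?_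
  obtain ⟨e, he⟩ := exists_pow_lt_of_lt_one hε
    (inv_lt_one_of_one_lt₀ (Nat.one_lt_cast.mpr hp : 1 < (p : ℝ≥0)))
  refine ⟨⟨_, inv_pow_mem p e⟩, ?_, ?_⟩ <;> rw [toNNReal_inv_pow]
  · positivity
  · exact he

theorem denseRange_toNNReal_comp_eval {ι : Type*} (hp : 1 < p) (i : ι) :
    DenseRange ((toNNReal p).comp (Pi.evalAddMonoidHom (fun _ => pPowRat p) i)) := by
  have hsurj : (Pi.evalAddMonoidHom (fun _ => pPowRat p) i : _ → _).Surjective :=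
    Function.surjective_eval i
  rw [DenseRange, AddMonoidHom.coe_comp, hsurj.range_comp]
  exact denseRange_toNNReal hp

end pPowRat

end Exponents

theorem integralPerfectoidTateAlgebra_multivariate_uncountable_chain_of_primes_general
    {R M : Type*} [CommRing R] [AddCommMonoid M] [UniqueSums M] {w : Valuation R ℝ≥0} {π : R}
    {δ : M →+ ℝ≥0} (hw : ∀ r, w r ≤ 1) (hπ0 : 0 < w π) (hπ1 : w π < 1) (hδ : DenseRange δ) :
    ∃ P : Set.Ioo (0 : ℝ) 1 → Ideal (CompletedMonoidAlgebra M π),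
      (∀ l, (P l).IsPrime) ∧
      ∀ l m : Set.Ioo (0 : ℝ) 1, (l : ℝ) < (m : ℝ) → P l < P m := by
  let U : Ultrafilter ℝ≥0 := .of atTop
  have hU : (U : Filter ℝ≥0) ≤ atTop := Ultrafilter.of_le atTop
  have hlt_one (θ : ℝ) : ∀ᶠ s in U, powerGauge (w π) θ s < 1 :=
    hU ((eventually_gt_atTop 0).mono fun _ => powerGauge_lt_one hπ1 θ)
  have hle_pow {θ θ' : ℝ} (h : θ < θ') (N : ℕ) :
      ∀ᶠ s in U, powerGauge (w π) θ' s ≤ powerGauge (w π) θ s ^ N :=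
    hU (eventually_powerGauge_le_pow hπ0 hπ1.le h N)
  refine ⟨fun l => rapidDecayIdeal (u := fun s => completedGaussValuation hw hπ1 (s • δ))
    (fun _ => adicExtension_le_one _ _) (powerGauge (w π) (1 - l)) U,
    fun l => rapidDecayIdeal_isPrime (hlt_one _), fun l m hlm => ?_⟩
  have hml : (1 - m : ℝ) < 1 - l := sub_lt_sub_left hlm 1
  obtain ⟨F, hF⟩ := exists_powerGauge_pow_le_completedGaussValuation_le hw hπ0 hπ1 hδ
    (sub_pos.mpr l.2.2) (sub_lt_self 1 l.2.1)
  have hF := ((eventually_ge_atTop 1).filter_mono hU).mono hF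
  refine SetLike.lt_iff_le_and_exists.mpr ⟨rapidDecayIdeal_mono ?_, F, fun N => ?_, ?_⟩
  · simpa using hle_pow hml 1
  · filter_upwards [hF, hle_pow hml N] with s hs hsN using hs.2.trans hsN
  · exact notMem_rapidDecayIdeal (.of_forall fun s => powerGauge_pos hπ0 _ s) (hlt_one _)
      (hF.mono fun _ hs => hs.1)

/-- the `n`-variable integral perfectoid Tate algebra
`O_K⟨x₁^{1/p^∞}, …, x_n^{1/p^∞}⟩` over a perfectoid field `K` of characteristic `p`
has a strictly increasing chain of prime ideals indexed by the real interval `(0,1)`;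
in particular it has uncountable Krull dimension. -/
theorem integralPerfectoidTateAlgebra_multivariate_uncountable_chain_of_primes
    (p : ℕ) (hp : p.Prime) (n : ℕ) (hn : 1 ≤ n) (K : Type) [Field K] [CharP K p]
    (v : Valuation K NNReal)
    (hnontriv : ∃ x : K, 0 < v x ∧ v x < 1)
    (hcomplete : ∀ f : ℕ → K,
      (∀ ε : NNReal, 0 < ε → ∃ N : ℕ, ∀ m ≥ N, ∀ k ≥ N, v (f m - f k) < ε) →
      ∃ L : K, ∀ ε : NNReal, 0 < ε → ∃ N : ℕ, ∀ k ≥ N, v (f k - L) < ε)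
    (hperf : Function.Bijective (fun x : K => x ^ p))
    (π : v.integer) (hπ0 : 0 < v (π : K)) (hπ1 : v (π : K) < 1) :
    ∃ P : Set.Ioo (0 : ℝ) 1 →
        Ideal (AdicCompletion
          (Ideal.span {algebraMap v.integer
            (AddMonoidAlgebra v.integer (Fin n → pPowRat p)) π})
          (AddMonoidAlgebra v.integer (Fin n → pPowRat p))),
      (∀ l, (P l).IsPrime) ∧
      ∀ l m : Set.Ioo (0 : ℝ) 1, (l : ℝ) < (m : ℝ) → P l < P m :=
  integralPerfectoidTateAlgebra_multivariate_uncountable_chain_of_primes_general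
    (w := v.comap v.integer.subtype) (fun r => r.2) hπ0 hπ1
    (pPowRat.denseRange_toNNReal_comp_eval hp.one_lt ⟨0, hn⟩)
end

section
/- Let p be a prime, κ a perfect field of characteristic p, and V = AddMonoidAlgebra κ M the monoid algebra κ[x^{1/p^∞}]. Let Γ be an additive subgroup of ℝ with 1 ∈ Γ, and let V[[t^{Γ≥0}]] = HahnSeries Γ≥0 V be the ring of Hahn (Mal'cev–Neumann) series over V with well-ordered support in Γ≥0 = {γ ∈ Γ : γ ≥ 0}. Then the t-adic completion of V[[t^{Γ≥0}]], i.e. its completion with respect to the ideal generated by the series t = HahnSeries.single 1 1, admits a family (𝔭_λ)_{λ∈(0,1)} of prime ideals, indexed by the real interval (0,1), with 𝔭_λ ⊊ 𝔭_μ whenever λ < μ; in particular it has uncountable Krull dimension. -/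
/-!
The series ring `V[[t^Γ≥0]]` is already `t`-adically complete, so the primes are sought there.
Give `t` a small weight `s > 0` and `x` the weight `1`. For `0 < b < 1` the series
`f_b = ∑ i, x ^ q i * t ^ (i + 1)` with `q i ≈ (i + 1) ^ (-b / (1 - b))` then has minimum weight
`≈ s ^ b`. Comparing minimum weights for all small `s` only partially orders the series, but this
partial comparison is refined by an honest valuation, whose valuation ring is any one containing the
fractions known to be bounded, with those known to be small as nonunits. If `b < d`, then `f_b` is
divisible by every power of `f_d` in the valuation ring, as `n * s ^ d ≤ s ^ b` for small `s`. The
radicals of the ideals `(f_b)` are prime, as all radicals of proper ideals in a valuation ring are,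
and contract to the desired chain.
-/

set_option synthInstance.maxHeartbeats 1000000
set_option maxHeartbeats 1000000

/-- The submonoid `Γ≥0` of nonnegative elements of an additive subgroup `Γ` of `ℝ`. -/
def nonnegPart (Γ : AddSubgroup ℝ) : AddSubmonoid ℝ where
  carrier := {x : ℝ | x ∈ Γ ∧ 0 ≤ x}
  zero_mem' := ⟨Γ.zero_mem, le_rfl⟩
  add_mem' := fun ha hb => ⟨Γ.add_mem ha.1 hb.1, add_nonneg ha.2 hb.2⟩

theorem isPrime_radical_of_preValuationRing {V : Type*} [CommRing V] [PreValuationRing V]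
    {I : Ideal V} (hI : I ≠ ⊤) : I.radical.IsPrime := by
  obtain ⟨M, hM, hIM⟩ := I.exists_le_maximal hI
  rw [Ideal.radical_eq_sInf]
  exact Ideal.sInf_isPrime_of_isChain ⟨M, hIM, hM.isPrime⟩
    (fun J _ J' _ _ => (ValuationRing.le_total_ideal V).total J J') fun _ hJ => hJ.2

theorem exists_strictMono_isPrime_of_pow_dvd {A V ι : Type*} [CommRing A] [CommRing V] [IsDomain V]
    [PreValuationRing V] [Preorder ι] (φ : A →+* V) (f : ι → A) (hf0 : ∀ i, φ (f i) ≠ 0)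
    (hf1 : ∀ i, ¬ IsUnit (φ (f i))) (hf : ∀ i j, i < j → ∀ n : ℕ, φ (f j) ^ n ∣ φ (f i)) :
    ∃ P : ι → Ideal A, (∀ i, (P i).IsPrime) ∧ StrictMono P := by
  let Q (i : ι) : Ideal V := (Ideal.span {φ (f i)}).radical
  have hQ (i : ι) : (Q i).IsPrime := isPrime_radical_of_preValuationRing <| by
    rw [Ne, Ideal.span_singleton_eq_top]
    exact hf1 i
  refine ⟨fun i => (Q i).comap φ, fun i => (hQ i).comap φ, fun i j hij => ?_⟩
  refine lt_of_le_not_ge (Ideal.comap_mono (Ideal.radical_mono ?_)) fun hle => ?_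
  · rw [Ideal.span_singleton_le_span_singleton]
    simpa using hf i j hij 1
  · obtain ⟨n, hn⟩ : f j ∈ (Q i).comap φ :=
      hle (Ideal.mem_comap.2 (Ideal.le_radical (Ideal.mem_span_singleton_self _)))
    have hdvd : φ (f j) ^ (n + 1) ∣ φ (f j) ^ n :=
      (hf i j hij (n + 1)).trans (Ideal.mem_span_singleton.1 hn)
    exact ((pow_dvd_pow_iff (hf0 j) (hf1 j)).1 hdvd).not_gt n.lt_succ_self

/-- A system of balls on a ring `A`, standing in for a partially defined nonarchimedean absolute
value `|·|`. The radii are elements `b` of `A` at which `|·|` is defined and multiplicative;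
`closedBall b` stands for `{a | |a| ≤ |b|}` and `openBall b` for `{a | |a| < |b|}`. -/
structure BallSystem (A : Type*) [CommRing A] where
  radii : Submonoid A
  closedBall : radii → AddSubgroup A
  openBall : radii → AddSubgroup A
  openBall_le_closedBall (b : radii) : openBall b ≤ closedBall b
  self_mem_closedBall (b : radii) : (b : A) ∈ closedBall b
  self_notMem_openBall (b : radii) : (b : A) ∉ openBall b
  mul_mem_closedBall {b b' : radii} {a a' : A} :
    a ∈ closedBall b → a' ∈ closedBall b' → a * a' ∈ closedBall (b * b')
  mul_mem_openBall {b b' : radii} {a a' : A} :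
    a ∈ closedBall b → a' ∈ openBall b' → a * a' ∈ openBall (b * b')

namespace BallSystem

variable {A : Type*} [CommRing A] (D : BallSystem A) (K : Type*) [Field K] [Algebra A K]

/-- The fractions `a / b` with `|a| ≤ |b|`. -/
def boundedFractions : Subring K where
  carrier := {z | ∃ a b, a ∈ D.closedBall b ∧ z * algebraMap A K b = algebraMap A K a}
  zero_mem' := ⟨0, 1, zero_mem _, by simp⟩
  one_mem' := ⟨1, 1, D.self_mem_closedBall 1, by simp⟩
  neg_mem' := by
    rintro z ⟨a, b, ha, hz⟩
    exact ⟨-a, b, neg_mem ha, by simp [hz]⟩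
  mul_mem' := by
    rintro z z' ⟨a, b, ha, hz⟩ ⟨a', b', ha', hz'⟩
    refine ⟨a * a', b * b', D.mul_mem_closedBall ha ha', ?_⟩
    simp only [Submonoid.coe_mul, map_mul, ← hz, ← hz']
    ring
  add_mem' := by
    rintro z z' ⟨a, b, ha, hz⟩ ⟨a', b', ha', hz'⟩
    refine ⟨a * b' + b * a', b * b',
      add_mem (D.mul_mem_closedBall ha (D.self_mem_closedBall b'))
        (D.mul_mem_closedBall (D.self_mem_closedBall b) ha'), ?_⟩
    simp only [Submonoid.coe_mul, map_mul, map_add, ← hz, ← hz']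
    ring

/-- The ideal of the fractions `a / b` with `|a| < |b|`. -/
def smallFractions : Ideal (D.boundedFractions K) where
  carrier := {z | ∃ a b, a ∈ D.openBall b ∧ (z : K) * algebraMap A K b = algebraMap A K a}
  zero_mem' := ⟨0, 1, zero_mem _, by simp⟩
  smul_mem' := by
    rintro ⟨z, a, b, ha, hz⟩ ⟨z', _⟩ ⟨a', b', ha', hz'⟩
    refine ⟨a * a', b * b', D.mul_mem_openBall ha ha', ?_⟩
    simp only [smul_eq_mul, Subring.coe_mul, Submonoid.coe_mul, map_mul, ← hz, ← hz']
    ring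
  add_mem' := by
    rintro ⟨z, _⟩ ⟨z', _⟩ ⟨a, b, ha, hz⟩ ⟨a', b', ha', hz'⟩
    refine ⟨b' * a + b * a', b * b',
      add_mem (mul_comm b' b ▸ D.mul_mem_openBall (D.self_mem_closedBall b') ha)
        (D.mul_mem_openBall (D.self_mem_closedBall b) ha'), ?_⟩
    simp only [Subring.coe_add, Submonoid.coe_mul, map_mul, map_add, ← hz, ← hz']
    ring

variable [FaithfulSMul A K]

theorem smallFractions_ne_top : D.smallFractions K ≠ ⊤ := by
  intro h
  obtain ⟨a, b, ha, hab⟩ := (Ideal.eq_top_iff_one _).1 h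
  rw [Subring.coe_one, one_mul] at hab
  rw [← FaithfulSMul.algebraMap_injective A K hab] at ha
  exact D.self_notMem_openBall b ha

theorem ne_zero (b : D.radii) : (b : A) ≠ 0 := fun h =>
  D.self_notMem_openBall b (h ▸ zero_mem _)

theorem exists_valuationSubring : ∃ V : ValuationSubring K,
    (∀ a b, a ∈ D.closedBall b → algebraMap A K a / algebraMap A K b ∈ V) ∧
    ∀ a b, a ∈ D.openBall b → algebraMap A K a / algebraMap A K b ∈ V.nonunits := by
  obtain ⟨V, hV, hV'⟩ := Ideal.image_subset_nonunits_valuationSubring _ (D.smallFractions_ne_top K)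
  have div_mul (a : A) (b : D.radii) :
      algebraMap A K a / algebraMap A K b * algebraMap A K b = algebraMap A K a :=
    div_mul_cancel₀ _ ((FaithfulSMul.algebraMap_eq_zero_iff A K).not.2 (D.ne_zero b))
  exact ⟨V, fun a b ha => hV ⟨a, b, ha, div_mul a b⟩, fun a b ha =>
    hV' ⟨⟨_, a, b, D.openBall_le_closedBall b ha, div_mul a b⟩, ⟨a, b, ha, div_mul a b⟩, rfl⟩⟩

theorem exists_strictMono_isPrime [IsDomain A] {ι : Type*} [Preorder ι]
    (hD : ∀ a, a ∈ D.closedBall 1) (f : ι → D.radii) (hf1 : ∀ i, (f i : A) ∈ D.openBall 1)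
    (hf : ∀ i j, i < j → ∀ n : ℕ, (f i : A) ∈ D.closedBall (f j ^ n)) :
    ∃ P : ι → Ideal A, (∀ i, (P i).IsPrime) ∧ StrictMono P := by
  let K := FractionRing A
  obtain ⟨V, hV, hV'⟩ := D.exists_valuationSubring K
  let φ : A →+* V := (algebraMap A K).codRestrict V.toSubring fun a => by simpa using hV a 1 (hD a)
  have hφ (b : D.radii) : algebraMap A K b ≠ 0 :=
    (FaithfulSMul.algebraMap_eq_zero_iff A K).not.2 (D.ne_zero b)
  refine exists_strictMono_isPrime_of_pow_dvd φ (fun i => (f i : A))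
    (fun i h => hφ (f i) (congrArg Subtype.val h)) (fun i => ?_) fun i j hij n => ?_
  · have hmem : algebraMap A K (f i) ∈ V.nonunits := by simpa using hV' _ _ (hf1 i)
    exact (V.coe_mem_nonunits_iff (a := φ (f i))).1 hmem
  · have hdvd : φ (f j ^ n : D.radii) ∣ φ (f i) :=
      ⟨⟨_, hV _ _ (hf i j hij n)⟩, Subtype.ext (mul_div_cancel₀ _ (hφ _)).symm⟩
    rwa [SubmonoidClass.coe_pow, map_pow] at hdvd

end BallSystem

theorem exists_addValuation_le_sum {R T ι : Type*} [Ring R] [LinearOrderedAddCommMonoidWithTop T]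
    (v : AddValuation R T) {s : Finset ι} {f : ι → R} (h : v (∑ i ∈ s, f i) ≠ ⊤) :
    ∃ i ∈ s, v (f i) ≤ v (∑ i ∈ s, f i) := by
  by_contra! hlt
  exact (v.map_lt_sum h hlt).false

section Weight

variable {R G G' H σ : Type*} [CommRing R] [AddCancelCommMonoid H] [LinearOrder H]
  [IsOrderedAddMonoid H] (v : AddValuation R (WithTop H))

section Additive

variable [PartialOrder G] [PartialOrder G'] (w : G → H)

/-- The weight `v r + w g` of the term `r t ^ g` of a Hahn series `a`, where `t` is given the
weights `w`. It is `⊤` if the term vanishes. -/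
def termWeight (a : HahnSeries G R) (g : G) : WithTop H :=
  v (a.coeff g) + w g

/-- The minimum weight of the terms of `a` is attained and equal to `c`. -/
def HasWeight (a : HahnSeries G R) (c : H) : Prop :=
  IsLeast (Set.range (termWeight v w a)) c

variable {v w} {a b : HahnSeries G R} {c : H}

theorem termWeight_of_coeff_eq_zero {g : G} (h : a.coeff g = 0) : termWeight v w a g = ⊤ := by
  simp [termWeight, h]

theorem min_termWeight_le_add (g : G) :
    min (termWeight v w a g) (termWeight v w b g) ≤ termWeight v w (a + b) g := by
  rw [termWeight, termWeight, min_add_add_right]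
  exact add_le_add_left (v.map_add _ _) _

variable (v w c) in
/-- The series all of whose terms have weight at least `c`. -/
def weightGE : AddSubgroup (HahnSeries G R) where
  carrier := {a | ∀ g, c ≤ termWeight v w a g}
  zero_mem' g := by simp [termWeight]
  add_mem' ha hb g := (le_min (ha g) (hb g)).trans (min_termWeight_le_add g)
  neg_mem' ha g := by simpa [termWeight] using ha g

variable (v w c) in
/-- The series all of whose terms have weight greater than `c`. -/
def weightGT : AddSubgroup (HahnSeries G R) where
  carrier := {a | ∀ g, c < termWeight v w a g}
  zero_mem' g := by simp [termWeight]
  add_mem' ha hb g := (lt_min (ha g) (hb g)).trans_le (min_termWeight_le_add g)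
  neg_mem' ha g := by simpa [termWeight] using ha g

theorem weightGT_le_weightGE : weightGT v w c ≤ weightGE v w c :=
  fun _ ha g => (ha g).le

theorem weightGE_anti {c d : H} (h : c ≤ d) : weightGE v w d ≤ weightGE v w c :=
  fun _ ha g => (WithTop.coe_le_coe.2 h).trans (ha g)

theorem weightGE_le_weightGT {c d : H} (h : c < d) : weightGE v w d ≤ weightGT v w c :=
  fun _ ha g => (WithTop.coe_lt_coe.2 h).trans_le (ha g)

namespace HasWeight

theorem mem_weightGE (ha : HasWeight v w a c) : a ∈ weightGE v w c :=
  fun g => ha.2 ⟨g, rfl⟩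

theorem notMem_weightGT (ha : HasWeight v w a c) : a ∉ weightGT v w c := by
  obtain ⟨g, hg⟩ := ha.1
  exact fun h => (h g).ne' hg

theorem unique {c d : H} (hc : HasWeight v w a c) (hd : HasWeight v w a d) : c = d :=
  WithTop.coe_injective (IsLeast.unique hc hd)

theorem exists_first {G : Type*} [LinearOrder G] {w : G → H} {a : HahnSeries G R}
    (ha : HasWeight v w a c) :
    ∃ g, termWeight v w a g = c ∧ ∀ g' < g, c < termWeight v w a g' := by
  have hwf : {g | termWeight v w a g = c}.IsWF := a.isWF_support.mono fun g hg h =>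
    WithTop.coe_ne_top (hg.symm.trans (termWeight_of_coeff_eq_zero h))
  have hmin := hwf.min_mem ha.1
  exact ⟨_, hmin, fun g' hg' => (ha.mem_weightGE g').lt_of_ne
    fun h => hwf.not_lt_min ha.1 h.symm hg'⟩

theorem embDomain (ι : G ↪o G') {w : G' → H} {a : HahnSeries G R}
    (ha : HasWeight v (w ∘ ι) a c) : HasWeight v w (HahnSeries.embDomain ι a) c := by
  have hι (g : G) : termWeight v w (HahnSeries.embDomain ι a) (ι g) = termWeight v (w ∘ ι) a g := by
    simp [termWeight]
  refine ⟨?_, ?_⟩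
  · obtain ⟨g, hg⟩ := ha.1
    exact ⟨ι g, (hι g).trans hg⟩
  · rintro _ ⟨g', rfl⟩
    by_cases hg' : g' ∈ Set.range ι
    · obtain ⟨g, rfl⟩ := hg'
      rw [hι]
      exact ha.mem_weightGE g
    · rw [termWeight_of_coeff_eq_zero (HahnSeries.embDomain_of_notMem_range hg')]
      exact le_top

end HasWeight

end Additive

section Multiplicative

variable [AddCommMonoid G] [LinearOrder G] {v} {w : G →+ H} {a b : HahnSeries G R} {c d : H}

theorem addValuation_coeff_mul_coeff_add (i j : G) :
    v (a.coeff i * b.coeff j) + w (i + j) = termWeight v w a i + termWeight v w b j := by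
  rw [termWeight, termWeight, map_add, v.map_mul, WithTop.coe_add, add_add_add_comm]

theorem HasWeight.one : HasWeight v w 1 0 := by
  refine ⟨⟨0, by simp [termWeight]⟩, ?_⟩
  rintro _ ⟨g, rfl⟩
  by_cases hg : g = 0 <;> simp [termWeight, HahnSeries.coeff_one, hg]

variable [IsOrderedCancelAddMonoid G]

theorem exists_add_termWeight_le_mul {g : G} (h : termWeight v w (a * b) g ≠ ⊤) :
    ∃ i j, i + j = g ∧ termWeight v w a i + termWeight v w b j ≤ termWeight v w (a * b) g := by
  rw [termWeight, HahnSeries.coeff_mul] at h ⊢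
  obtain ⟨⟨i, j⟩, hij, hle⟩ := exists_addValuation_le_sum v (WithTop.add_ne_top.1 h).1
  obtain rfl := (Finset.mem_antidiagonal.1 hij).2.2
  refine ⟨i, j, rfl, ?_⟩
  rw [← addValuation_coeff_mul_coeff_add]
  exact add_le_add_left hle _

theorem mul_mem_weightGE (ha : a ∈ weightGE v w c) (hb : b ∈ weightGE v w d) :
    a * b ∈ weightGE v w (c + d) := by
  intro g
  by_contra! hlt
  obtain ⟨i, j, -, hle⟩ := exists_add_termWeight_le_mul hlt.ne_top
  exact (hle.trans_lt hlt).not_ge (add_le_add (ha i) (hb j))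

theorem mul_mem_weightGT (ha : a ∈ weightGE v w c) (hb : b ∈ weightGT v w d) :
    a * b ∈ weightGT v w (c + d) := by
  intro g
  by_contra! hle
  obtain ⟨i, j, -, hle'⟩ :=
    exists_add_termWeight_le_mul (ne_top_of_le_ne_top WithTop.coe_ne_top hle)
  exact (hle'.trans hle).not_gt (WithTop.add_lt_add_of_le_of_lt WithTop.coe_ne_top (ha i) (hb j))

namespace HasWeight

/-- The product of the first terms of minimum weight of `a` and `b` is not cancelled: any other
product of terms with the same exponent involves an earlier term of `a` or of `b`. -/
theorem mul (ha : HasWeight v w a c) (hb : HasWeight v w b d) : HasWeight v w (a * b) (c + d) := by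
  classical
  obtain ⟨g, hg, hgmin⟩ := ha.exists_first
  obtain ⟨h, hh, hhmin⟩ := hb.exists_first
  refine ⟨⟨g + h, ?_⟩, fun _ ⟨k, hk⟩ => hk ▸ mul_mem_weightGE ha.mem_weightGE hb.mem_weightGE k⟩
  have hgh : v (a.coeff g * b.coeff h) + w (g + h) = (c + d : H) := by
    rw [addValuation_coeff_mul_coeff_add, hg, hh, WithTop.coe_add]
  have hlt (i j : G) (hij : i + j = g + h) (hne : (i, j) ≠ (g, h)) :
      v (a.coeff g * b.coeff h) < v (a.coeff i * b.coeff j) := by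
    refine lt_of_add_lt_add_right (a := (w (g + h) : WithTop H)) ?_
    rw [hgh, ← hij, addValuation_coeff_mul_coeff_add, WithTop.coe_add]
    rcases lt_trichotomy i g with hi | rfl | hi
    · exact WithTop.add_lt_add_of_lt_of_le WithTop.coe_ne_top (hgmin i hi) (hb.mem_weightGE j)
    · exact absurd (congrArg (Prod.mk i) (add_left_cancel hij)) hne
    · have hj : j < h := lt_of_add_lt_add_left (hij.trans_lt (add_lt_add_left hi h))
      exact WithTop.add_lt_add_of_le_of_lt WithTop.coe_ne_top (ha.mem_weightGE i) (hhmin j hj)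
  have hmem : (g, h) ∈ Finset.antidiagonal a.isPWO_support b.isPWO_support (g + h) := by
    refine Finset.mem_antidiagonal.2 ⟨fun h0 => ?_, fun h0 => ?_, rfl⟩
    · exact WithTop.coe_ne_top (hg.symm.trans (termWeight_of_coeff_eq_zero h0))
    · exact WithTop.coe_ne_top (hh.symm.trans (termWeight_of_coeff_eq_zero h0))
  rw [← hgh, termWeight, HahnSeries.coeff_mul, ← Finset.add_sum_erase _ _ hmem,
    v.map_add_eq_of_lt_left (v.map_lt_sum (WithTop.add_ne_top.1 (hgh.trans_ne WithTop.coe_ne_top)).1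
      fun ij hij => ?_)]
  obtain ⟨hne, hij⟩ := Finset.mem_erase.1 hij
  exact hlt _ _ (Finset.mem_antidiagonal.1 hij).2.2 hne

theorem pow (ha : HasWeight v w a c) (n : ℕ) : HasWeight v w (a ^ n) (n • c) := by
  induction n with
  | zero => simpa using HasWeight.one
  | succ n ih => simpa only [pow_succ, succ_nsmul] using ih.mul ha

end HasWeight

variable (v) (w : σ → G →+ H) (l : Filter σ)

/-- The series that, eventually along `l`, attain their minimum weight. -/
def eventuallyWeighted : Submonoid (HahnSeries G R) where
  carrier := {b | ∀ᶠ s in l, ∃ c, HasWeight v (w s) b c}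
  one_mem' := .of_forall fun _ => ⟨0, .one⟩
  mul_mem' ha hb := by
    filter_upwards [ha, hb] with s ⟨c, hc⟩ ⟨d, hd⟩
    exact ⟨c + d, hc.mul hd⟩

/-- Given groups `L s c` of series of weight bounded below by `c`, the series that, eventually along
`l`, belong to `L s c` for `c` the minimum weight of `b`. -/
def eventuallyMem (L : σ → H → AddSubgroup (HahnSeries G R)) (b : eventuallyWeighted v w l) :
    AddSubgroup (HahnSeries G R) where
  carrier := {a | ∀ᶠ s in l, ∃ c, HasWeight v (w s) b c ∧ a ∈ L s c}
  zero_mem' := b.2.mono fun _ ⟨c, hc⟩ => ⟨c, hc, zero_mem _⟩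
  add_mem' ha ha' := by
    filter_upwards [ha, ha'] with s ⟨c, hc, h⟩ ⟨c', hc', h'⟩
    obtain rfl := hc.unique hc'
    exact ⟨c, hc, add_mem h h'⟩
  neg_mem' ha := by
    filter_upwards [ha] with s ⟨c, hc, h⟩
    exact ⟨c, hc, neg_mem h⟩

/-- The system of balls on a Hahn series ring defined by the eventual comparison along `l` of
weights, where smaller weight means larger absolute value. -/
def weightBalls [l.NeBot] : BallSystem (HahnSeries G R) where
  radii := eventuallyWeighted v w l
  closedBall := eventuallyMem v w l fun s => weightGE v (w s)
  openBall := eventuallyMem v w l fun s => weightGT v (w s)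
  openBall_le_closedBall _ _ ha := ha.mono fun _ ⟨c, hc, h⟩ => ⟨c, hc, weightGT_le_weightGE h⟩
  self_mem_closedBall b := b.2.mono fun _ ⟨c, hc⟩ => ⟨c, hc, hc.mem_weightGE⟩
  self_notMem_openBall b hb := by
    obtain ⟨s, c, hc, h⟩ := hb.exists
    exact hc.notMem_weightGT h
  mul_mem_closedBall ha ha' := by
    filter_upwards [ha, ha'] with s ⟨c, hc, h⟩ ⟨c', hc', h'⟩
    exact ⟨c + c', hc.mul hc', mul_mem_weightGE h h'⟩
  mul_mem_openBall ha ha' := by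
    filter_upwards [ha, ha'] with s ⟨c, hc, h⟩ ⟨c', hc', h'⟩
    exact ⟨c + c', hc.mul hc', mul_mem_weightGT h h'⟩

end Multiplicative

end Weight

section TAdic

variable {G R : Type*}

theorem isWF_of_forall_isWF_inter_Iio [Preorder G] {s : Set G} (h : ∀ a, (s ∩ Set.Iio a).IsWF) :
    s.IsWF := by
  refine Set.isWF_iff_no_descending_seq.2 fun f hf hfs => ?_
  exact Set.isWF_iff_no_descending_seq.1 (h (f 0)) (fun n => f (n + 1))
    (hf.comp_strictMono (strictMono_id.add_const 1)) fun n => ⟨hfs _, hf n.succ_pos⟩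

theorem isPWO_support_of_forall_eqOn_coeff [LinearOrder G] [Zero R] {c : G → R}
    (h : ∀ a, ∃ x : HahnSeries G R, Set.EqOn c x.coeff (Set.Iio a)) :
    (Function.support c).IsPWO := by
  refine (isWF_of_forall_isWF_inter_Iio fun a => ?_).isPWO
  obtain ⟨x, hx⟩ := h a
  exact x.isWF_support.mono fun g ⟨hg, hga⟩ => by rwa [HahnSeries.mem_support, ← hx hga]

variable [AddCommMonoid G] [LinearOrder G] [IsOrderedCancelAddMonoid G] [CanonicallyOrderedAdd G]
  [CommRing R]

theorem coeff_single_mul_eq_zero_of_lt {e g : G} (hg : g < e) (r : R) (y : HahnSeries G R) :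
    (HahnSeries.single e r * y).coeff g = 0 := by
  by_contra hne
  obtain ⟨i, hi, j, -, rfl⟩ := HahnSeries.support_mul_subset hne
  obtain rfl : i = e := HahnSeries.support_single_subset hi
  exact hg.not_ge le_self_add

theorem single_one_dvd_iff_coeff_eq_zero {e : G} {x : HahnSeries G R} :
    HahnSeries.single e 1 ∣ x ↔ ∀ g < e, x.coeff g = 0 := by
  refine ⟨fun ⟨y, hy⟩ g hg => hy ▸ coeff_single_mul_eq_zero_of_lt hg 1 y, fun h => ?_⟩
  have hpwo : (Function.support fun g => x.coeff (g + e)).IsPWO := fun f => by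
    obtain ⟨i, j, hij, hle⟩ := x.isPWO_support fun i => ⟨(f i : G) + e, (f i).2⟩
    exact ⟨i, j, hij, le_of_add_le_add_right hle⟩
  refine ⟨⟨_, hpwo⟩, ?_⟩
  ext g
  rcases lt_or_ge g e with hg | hg
  · rw [h g hg, coeff_single_mul_eq_zero_of_lt hg]
  · obtain ⟨d, rfl⟩ := exists_add_of_le hg
    rw [add_comm e d, HahnSeries.coeff_single_mul_add, one_mul]

theorem mem_span_single_one_pow_iff_coeff_eq_zero {e : G} {n : ℕ} {x : HahnSeries G R} :
    x ∈ Ideal.span {HahnSeries.single e (1 : R)} ^ n ↔ ∀ g < n • e, x.coeff g = 0 := by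
  rw [Ideal.span_singleton_pow, HahnSeries.single_pow, one_pow, Ideal.mem_span_singleton,
    single_one_dvd_iff_coeff_eq_zero]

theorem sModEq_span_single_one_pow_iff_eqOn_coeff {e : G} {n : ℕ} {x y : HahnSeries G R} :
    x ≡ y [SMOD Ideal.span {HahnSeries.single e (1 : R)} ^ n • (⊤ : Ideal (HahnSeries G R))] ↔
      Set.EqOn x.coeff y.coeff (Set.Iio (n • e)) := by
  rw [SModEq.sub_mem, smul_eq_mul, Ideal.mul_top, mem_span_single_one_pow_iff_coeff_eq_zero]
  simp only [HahnSeries.coeff_sub, sub_eq_zero]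
  rfl

theorem isAdicComplete_span_single_one [Archimedean G] {e : G} (he : 0 < e) :
    IsAdicComplete (Ideal.span {HahnSeries.single e (1 : R)}) (HahnSeries G R) where
  haus' x hx := by
    ext g
    obtain ⟨n, hn⟩ := exists_lt_nsmul he g
    exact sModEq_span_single_one_pow_iff_eqOn_coeff.1 (hx n) hn
  prec' f hf := by
    have hcoeff {m n : ℕ} {g : G} (hm : g < m • e) (hn : g < n • e) :
        (f m).coeff g = (f n).coeff g := by
      wlog hmn : m ≤ n generalizing m n
      · exact (this hn hm (le_of_not_ge hmn)).symm
      · exact sModEq_span_single_one_pow_iff_eqOn_coeff.1 (hf hmn) hm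
    choose N hN using exists_lt_nsmul he
    have hlim (n : ℕ) :
        Set.EqOn (fun g => (f (N g)).coeff g) (f n).coeff (Set.Iio (n • e)) :=
      fun g hg => hcoeff (hN g) hg
    refine ⟨⟨_, isPWO_support_of_forall_eqOn_coeff fun a =>
      ⟨f (N a), (hlim (N a)).mono (Set.Iio_subset_Iio (hN a).le)⟩⟩, fun n => ?_⟩
    exact sModEq_span_single_one_pow_iff_eqOn_coeff.2 (hlim n).symm

end TAdic

section Rpow

open Filter Topology

theorem rpow_le_rpow_neg_add_mul {b s y : ℝ} (hb0 : 0 ≤ b) (hb1 : b < 1) (hs : 0 < s)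
    (hy : 0 < y) : s ^ b ≤ y ^ (-(b / (1 - b))) + s * y := by
  have hb : 0 < 1 - b := sub_pos.2 hb1
  have hA : 0 ≤ y ^ (-(b / (1 - b))) := Real.rpow_nonneg hy.le _
  have hB : 0 ≤ s * y := by positivity
  calc s ^ b = (y ^ (-(b / (1 - b)))) ^ (1 - b) * (s * y) ^ b := by
        rw [← Real.rpow_mul hy.le, neg_mul, div_mul_cancel₀ b hb.ne', Real.mul_rpow hs.le hy.le,
          mul_left_comm, ← Real.rpow_add hy, neg_add_cancel, Real.rpow_zero, mul_one]
    _ ≤ (1 - b) * y ^ (-(b / (1 - b))) + b * (s * y) :=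
        Real.geom_mean_le_arith_mean2_weighted hb.le hb0 hA hB (by ring)
    _ ≤ y ^ (-(b / (1 - b))) + s * y :=
        add_le_add (mul_le_of_le_one_left hA (by linarith)) (mul_le_of_le_one_left hB hb1.le)

/-- The terms `y ^ (-(b / (1 - b)))` and `s * y` balance at `y = s ^ (b - 1)`, which is rounded to
an integer. -/
theorem exists_nat_rpow_neg_le_and_mul_le {b s : ℝ} (hb0 : 0 ≤ b) (hb1 : b < 1) (hs0 : 0 < s)
    (hs1 : s ≤ 1) :
    ∃ i : ℕ, ((i : ℝ) + 1) ^ (-(b / (1 - b))) ≤ s ^ b ∧ s * ((i : ℝ) + 1) ≤ 2 * s ^ b := by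
  have hb : 0 < 1 - b := sub_pos.2 hb1
  have hy : 0 < s ^ (b - 1) := Real.rpow_pos_of_pos hs0 _
  refine ⟨⌊s ^ (b - 1)⌋₊, ?_, ?_⟩
  · calc ((⌊s ^ (b - 1)⌋₊ : ℝ) + 1) ^ (-(b / (1 - b))) ≤ (s ^ (b - 1)) ^ (-(b / (1 - b))) :=
          Real.rpow_le_rpow_of_nonpos hy (Nat.lt_floor_add_one _).le
            (neg_nonpos.2 (div_nonneg hb0 hb.le))
      _ = s ^ b := by
          rw [← Real.rpow_mul hs0.le, mul_neg, ← neg_mul, neg_sub, mul_div_cancel₀ b hb.ne']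
  · have hfloor : s * ⌊s ^ (b - 1)⌋₊ ≤ s ^ b :=
      calc s * ⌊s ^ (b - 1)⌋₊ ≤ s * s ^ (b - 1) :=
            mul_le_mul_of_nonneg_left (Nat.floor_le hy.le) hs0.le
        _ = s ^ b := by rw [Real.rpow_sub_one hs0.ne', mul_div_cancel₀ _ hs0.ne']
    have hle : s ≤ s ^ b := by
      simpa using Real.rpow_le_rpow_of_exponent_ge hs0 hs1 hb1.le
    linarith

theorem eventually_mul_rpow_le_rpow {b d : ℝ} (hbd : b < d) (C : ℝ) :
    ∀ᶠ s in 𝓝[>] (0 : ℝ), C * s ^ d ≤ s ^ b := by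
  have htendsto : Tendsto (fun s : ℝ => C * s ^ (d - b)) (𝓝[>] 0) (𝓝 0) := by
    have := ((Real.continuousAt_rpow_const 0 (d - b) (.inr (sub_pos.2 hbd).le)).tendsto.const_mul
      C).mono_left (nhdsWithin_le_nhds (s := Set.Ioi 0))
    rwa [Real.zero_rpow (sub_pos.2 hbd).ne', mul_zero] at this
  filter_upwards [htendsto.eventually (ge_mem_nhds zero_lt_one), self_mem_nhdsWithin]
    with s hs (hs0 : 0 < s)
  calc C * s ^ d = C * s ^ (d - b) * s ^ b := by
        rw [mul_assoc, ← Real.rpow_add hs0, sub_add_cancel]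
    _ ≤ s ^ b := mul_le_of_le_one_left (Real.rpow_nonneg hs0.le b) hs

theorem exists_isLeast_range_add_mul {q : ℕ → ℝ} (hq : ∀ i, 0 ≤ q i) {s : ℝ} (hs : 0 < s) :
    ∃ c, IsLeast (Set.range fun i : ℕ => q i + s * ((i : ℝ) + 1)) c := by
  have htendsto : Tendsto (fun i : ℕ => q i + s * ((i : ℝ) + 1)) cofinite atTop := by
    rw [Nat.cofinite_eq_atTop]
    exact tendsto_atTop_mono (fun i => le_add_of_nonneg_left (hq i))
      ((tendsto_atTop_add_const_right _ _ tendsto_natCast_atTop_atTop).const_mul_atTop hs)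
  obtain ⟨i, hi⟩ := htendsto.exists_forall_le
  exact ⟨_, ⟨i, rfl⟩, Set.forall_mem_range.2 hi⟩

end Rpow

theorem exists_addValuation_eq_coe_between {R : Type*} [CommRing R]
    {v : AddValuation R (WithTop ℝ)} (hε : ∀ ε : ℝ, 0 < ε → ∃ a, 0 < v a ∧ v a < ε) {x : ℝ}
    (hx : 0 < x) : ∃ r, ∃ q : ℝ, v r = q ∧ x ≤ q ∧ q ≤ 2 * x := by
  obtain ⟨a, ha0, hax⟩ := hε x hx
  lift v a to ℝ using hax.ne_top with d hd
  rw [WithTop.coe_pos] at ha0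
  rw [WithTop.coe_lt_coe] at hax
  refine ⟨a ^ ⌈x / d⌉₊, ⌈x / d⌉₊ * d, ?_, (div_le_iff₀ ha0).1 (Nat.le_ceil _), ?_⟩
  · rw [v.map_pow, ← hd, ← WithTop.coe_nsmul, nsmul_eq_mul]
  · calc ⌈x / d⌉₊ * d ≤ (x / d + 1) * d :=
          mul_le_mul_of_nonneg_right (Nat.ceil_lt_add_one (by positivity)).le ha0.le
      _ = x + d := by field_simp
      _ ≤ 2 * x := by linarith

namespace nonnegPart

variable {Γ : AddSubgroup ℝ}

instance : CanonicallyOrderedAdd (nonnegPart Γ) where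
  exists_add_of_le {a b} h :=
    ⟨⟨b - a, Γ.sub_mem b.2.1 a.2.1, sub_nonneg.2 h⟩, Subtype.ext (add_sub_cancel _ _).symm⟩
  le_add_self _ b := Subtype.coe_le_coe.1 (le_add_of_nonneg_left b.2.2)
  le_self_add _ b := Subtype.coe_le_coe.1 (le_add_of_nonneg_right b.2.2)

variable (Γ) in
/-- The weights `g ↦ s * g` on the exponents `Γ≥0`. -/
noncomputable def scale (s : ℝ) : nonnegPart Γ →+ ℝ :=
  (AddMonoidHom.mulLeft s).comp (nonnegPart Γ).subtype

theorem scale_nonneg {s : ℝ} (hs : 0 ≤ s) (g : nonnegPart Γ) : 0 ≤ scale Γ s g :=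
  mul_nonneg hs g.2.2

/-- The positive integers as exponents, with `i` giving the exponent `i + 1`. -/
noncomputable def succEmb (h1 : (1 : ℝ) ∈ Γ) : ℕ ↪o nonnegPart Γ :=
  OrderEmbedding.ofStrictMono
    (fun i => ⟨(i : ℝ) + 1, Γ.add_mem (by simpa using Γ.nsmul_mem h1 i) h1, by positivity⟩)
    fun i j hij => Subtype.mk_lt_mk.2 (by simpa using hij)

end nonnegPart

section Chain

open Filter Topology

variable {R : Type*} [CommRing R] {v : AddValuation R (WithTop ℝ)} {Γ : AddSubgroup ℝ}

theorem hasWeight_embDomain_succEmb (h1 : (1 : ℝ) ∈ Γ) {F : HahnSeries ℕ R} {q : ℕ → ℝ}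
    (hF : ∀ i, v (F.coeff i) = q i) {s c : ℝ}
    (hc : IsLeast (Set.range fun i : ℕ => q i + s * ((i : ℝ) + 1)) c) :
    HasWeight v (nonnegPart.scale Γ s) (HahnSeries.embDomain (nonnegPart.succEmb h1) F) c := by
  refine HasWeight.embDomain _ ?_
  have hterm : termWeight v (nonnegPart.scale Γ s ∘ nonnegPart.succEmb h1) F =
      (↑) ∘ fun i : ℕ => q i + s * ((i : ℝ) + 1) :=
    funext fun i => congrArg (· + _) (hF i)
  rw [HasWeight, hterm, Set.range_comp]
  exact WithTop.coe_mono.map_isLeast hc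

theorem exists_hasWeight_rpow (hε : ∀ ε : ℝ, 0 < ε → ∃ a, 0 < v a ∧ v a < ε)
    (h1 : (1 : ℝ) ∈ Γ) {b : ℝ} (hb0 : 0 ≤ b) (hb1 : b < 1) :
    ∃ f : HahnSeries (nonnegPart Γ) R, ∀ s : ℝ, 0 < s → s ≤ 1 →
      ∃ c, HasWeight v (nonnegPart.scale Γ s) f c ∧ s ^ b ≤ c ∧ c ≤ 4 * s ^ b := by
  choose r q hrq hq hq' using fun i : ℕ => exists_addValuation_eq_coe_between hε
    (Real.rpow_pos_of_pos i.cast_add_one_pos (-(b / (1 - b))))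
  have hq0 (i : ℕ) : 0 ≤ q i := (Real.rpow_nonneg i.cast_add_one_pos.le _).trans (hq i)
  let F : HahnSeries ℕ R := ⟨r, Set.IsPWO.of_linearOrder _⟩
  refine ⟨HahnSeries.embDomain (nonnegPart.succEmb h1) F, fun s hs0 hs1 => ?_⟩
  obtain ⟨c, hc⟩ := exists_isLeast_range_add_mul hq0 hs0
  refine ⟨c, hasWeight_embDomain_succEmb h1 hrq hc, ?_, ?_⟩
  · obtain ⟨i, rfl⟩ := hc.1
    exact (rpow_le_rpow_neg_add_mul hb0 hb1 hs0 i.cast_add_one_pos).trans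
      (add_le_add_left (hq i) _)
  · obtain ⟨i, hi, hi'⟩ := exists_nat_rpow_neg_le_and_mul_le hb0 hb1 hs0 hs1
    have hci : c ≤ q i + s * ((i : ℝ) + 1) := hc.2 ⟨i, rfl⟩
    linarith [hq' i]

theorem exists_strictMono_isPrime_hahnSeries [IsDomain R] (hv : ∀ a, 0 ≤ v a)
    (hε : ∀ ε : ℝ, 0 < ε → ∃ a, 0 < v a ∧ v a < ε) (h1 : (1 : ℝ) ∈ Γ) :
    ∃ P : Set.Ioo (0 : ℝ) 1 → Ideal (HahnSeries (nonnegPart Γ) R),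
      (∀ l, (P l).IsPrime) ∧ StrictMono P := by
  choose f hf using fun b : Set.Ioo (0 : ℝ) 1 => exists_hasWeight_rpow hε h1 b.2.1.le b.2.2
  have hs : ∀ᶠ s in 𝓝[>] (0 : ℝ), 0 < s ∧ s ≤ 1 := Ioc_mem_nhdsGT zero_lt_one
  let D := weightBalls v (nonnegPart.scale Γ) (𝓝[>] 0)
  let F (i : Set.Ioo (0 : ℝ) 1) : D.radii :=
    ⟨f i, hs.mono fun s hs => (hf i s hs.1 hs.2).imp fun _ hc => hc.1⟩
  refine D.exists_strictMono_isPrime (fun a => hs.mono fun s hs => ⟨0, .one, fun g => ?_⟩) F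
    (fun i => hs.mono fun s hs => ?_) fun i j hij n => ?_
  · exact add_nonneg (hv _) (WithTop.coe_nonneg.2 (nonnegPart.scale_nonneg hs.1.le g))
  · obtain ⟨c, hc, hsc, -⟩ := hf i s hs.1 hs.2
    exact ⟨0, .one, weightGE_le_weightGT ((Real.rpow_pos_of_pos hs.1 _).trans_le hsc)
      hc.mem_weightGE⟩
  · filter_upwards [hs, eventually_mul_rpow_le_rpow hij (n * 4)] with s hs hle
    obtain ⟨c, hc, hsc, -⟩ := hf i s hs.1 hs.2
    obtain ⟨d, hd, -, hds⟩ := hf j s hs.1 hs.2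
    have hndc : n • d ≤ c :=
      calc n • d = n * d := nsmul_eq_mul n d
        _ ≤ n * (4 * s ^ (j : ℝ)) := mul_le_mul_of_nonneg_left hds n.cast_nonneg
        _ = n * 4 * s ^ (j : ℝ) := (mul_assoc _ _ _).symm
        _ ≤ c := hle.trans hsc
    exact ⟨n • d, hd.pow n, weightGE_anti hndc hc.mem_weightGE⟩

end Chain

section MonoidAlgebra

variable {M H : Type*} (k : Type*) [CommRing k] [IsDomain k] [AddCommMonoid M]
  [AddCancelCommMonoid H] [LinearOrder H] [IsOrderedCancelAddMonoid H] (φ : M →+ H)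

/-- The valuation on the monoid algebra `k[x ^ M]` with `x ^ m ↦ φ m` and trivial on `k`, obtained
from the order valuation of Hahn series by sending `x ^ m` to `t ^ φ m`. -/
noncomputable def monomialAddVal : AddValuation (AddMonoidAlgebra k M) (WithTop H) :=
  (HahnSeries.addVal H k).comap (AddMonoidAlgebra.lift k (HahnSeries H k) M
    { toFun := fun m => HahnSeries.single (φ m.toAdd) 1
      map_one' := by simp
      map_mul' := fun m m' => by simp }).toRingHom

variable {k φ}

theorem monomialAddVal_single (m : M) {r : k} (hr : r ≠ 0) :
    monomialAddVal k φ (AddMonoidAlgebra.single m r) = φ m := by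
  have h : monomialAddVal k φ (AddMonoidAlgebra.single m r) =
      HahnSeries.addVal H k (HahnSeries.single (φ m) r) :=
    congrArg (HahnSeries.addVal H k) (by simp [← HahnSeries.single_zero_mul_eq_smul])
  rw [h, HahnSeries.addVal_apply_of_ne (by simpa using hr), HahnSeries.order_single hr]

theorem monomialAddVal_nonneg (hφ : ∀ m, 0 ≤ φ m) (a : AddMonoidAlgebra k M) :
    0 ≤ monomialAddVal k φ a := by
  induction a using AddMonoidAlgebra.induction_linear with
  | zero => simp
  | add a b ha hb => exact (monomialAddVal k φ).map_le_add ha hb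
  | single m r =>
    rcases eq_or_ne r 0 with rfl | hr
    · simp
    · rw [monomialAddVal_single m hr]
      exact WithTop.coe_nonneg.2 (hφ m)

end MonoidAlgebra

theorem exists_monomialAddVal_lt {M : Type*} [AddCommMonoid M] {φ : M →+ ℝ}
    (hφ : ∀ ε : ℝ, 0 < ε → ∃ m, 0 < φ m ∧ φ m < ε) {k : Type*} [CommRing k] [IsDomain k] (ε : ℝ)
    (hε : 0 < ε) : ∃ a, 0 < monomialAddVal k φ a ∧ monomialAddVal k φ a < ε := by
  obtain ⟨m, hm0, hmε⟩ := hφ ε hε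
  refine ⟨AddMonoidAlgebra.single m 1, ?_⟩
  rw [monomialAddVal_single m one_ne_zero]
  exact ⟨WithTop.coe_pos.2 hm0, WithTop.coe_lt_coe.2 hmε⟩

namespace pPowRat

variable {p : ℕ}

/-- The inclusion of the exponents of `x` into `ℝ`. -/
noncomputable def toReal (p : ℕ) : pPowRat p →+ ℝ :=
  (Rat.castHom ℝ).toAddMonoidHom.comp (pPowRat p).subtype

theorem toReal_nonneg (q : pPowRat p) : 0 ≤ toReal p q := Rat.cast_nonneg.2 q.2.1

theorem exists_toReal_lt (hp : 1 < p) (ε : ℝ) (hε : 0 < ε) :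
    ∃ q, 0 < toReal p q ∧ toReal p q < ε := by
  have hp0 : (0 : ℝ) < p := by exact_mod_cast zero_lt_one.trans hp
  obtain ⟨n, hn⟩ := exists_pow_lt_of_lt_one hε (inv_lt_one_of_one_lt₀ (Nat.one_lt_cast.2 hp))
  let q : pPowRat p := ⟨(p : ℚ)⁻¹ ^ n, by positivity, n, 1, by
    rw [← mul_pow, mul_inv_cancel₀ (by exact_mod_cast hp0.ne'), one_pow, Int.cast_one]⟩
  have hq : toReal p q = (p : ℝ)⁻¹ ^ n := by simp [toReal, q]
  exact ⟨q, hq ▸ pow_pos (inv_pos.2 hp0) n, hq.trans_lt hn⟩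

end pPowRat

theorem malcevNeumann_tAdicCompletion_uncountable_chain_of_primes_general
    {R : Type*} [CommRing R] [IsDomain R] (v : AddValuation R (WithTop ℝ)) (hv : ∀ a, 0 ≤ v a)
    (hε : ∀ ε : ℝ, 0 < ε → ∃ a, 0 < v a ∧ v a < ε) (Γ : AddSubgroup ℝ) (h1 : (1 : ℝ) ∈ Γ) :
    ∃ P : Set.Ioo (0 : ℝ) 1 →
        Ideal (AdicCompletion
          (Ideal.span {HahnSeries.single (⟨1, h1, zero_le_one⟩ : nonnegPart Γ) (1 : R)})
          (HahnSeries (nonnegPart Γ) R)),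
      (∀ l, (P l).IsPrime) ∧ ∀ l m : Set.Ioo (0 : ℝ) 1, (l : ℝ) < (m : ℝ) → P l < P m := by
  let e : nonnegPart Γ := ⟨1, h1, zero_le_one⟩
  have he : 0 < e := zero_lt_one (α := ℝ)
  have := isAdicComplete_span_single_one (R := R) he
  let φ := (AdicCompletion.ofAlgEquiv (Ideal.span {HahnSeries.single e (1 : R)})).symm.toRingEquiv
  obtain ⟨P, hP, hmono⟩ := exists_strictMono_isPrime_hahnSeries hv hε h1
  exact ⟨fun l => (P l).comap φ, fun l => (hP l).comap φ,
    fun l m hlm => φ.idealComapOrderIso.strictMono (hmono hlm)⟩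

/-- for `κ` a perfect field of characteristic `p`,
`V = κ[x^{1/p^∞}]` and `Γ ≤ ℝ` an additive subgroup containing `1`, the `t`-adic
completion of the Mal'cev–Neumann series ring `V[[t^{Γ≥0}]]` has a strictly increasing
chain of prime ideals indexed by the real interval `(0,1)`; in particular it has
uncountable Krull dimension. -/
theorem malcevNeumann_tAdicCompletion_uncountable_chain_of_primes
    (p : ℕ) (hp : p.Prime) (κ : Type) [Field κ] [CharP κ p]
    (hperf : Function.Bijective (fun x : κ => x ^ p))
    (Γ : AddSubgroup ℝ) (h1 : (1 : ℝ) ∈ Γ) :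
    ∃ P : Set.Ioo (0 : ℝ) 1 →
        Ideal (AdicCompletion
          (Ideal.span
            {HahnSeries.single (⟨1, h1, zero_le_one⟩ : nonnegPart Γ)
              (1 : AddMonoidAlgebra κ (pPowRat p))})
          (HahnSeries (nonnegPart Γ) (AddMonoidAlgebra κ (pPowRat p)))),
      (∀ l, (P l).IsPrime) ∧
      ∀ l m : Set.Ioo (0 : ℝ) 1, (l : ℝ) < (m : ℝ) → P l < P m :=
  malcevNeumann_tAdicCompletion_uncountable_chain_of_primes_general
    (monomialAddVal κ (pPowRat.toReal p)) (monomialAddVal_nonneg pPowRat.toReal_nonneg)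
    (exists_monomialAddVal_lt (pPowRat.exists_toReal_lt hp.one_lt)) Γ h1
end

section
/- Let p be a prime. Suppose that for every noetherian local domain (A, 𝔪) that is 𝔪-adically complete, of mixed characteristic (char A = 0, p ∈ 𝔪) and of Krull dimension exactly 2, the p-adic completion of A⁺ (the integral closure of A in an algebraic closure of its fraction field) admits a family of prime ideals indexed by the real interval (0,1) that is strictly increasing under inclusion. Then for every noetherian local domain (A, 𝔪) that is 𝔪-adically complete, of mixed characteristic and of Krull dimension at least 2, the p-adic completion of A⁺ admits such a family; in particular it has uncountable Krull dimension. -/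
set_option synthInstance.maxHeartbeats 1000000
set_option maxHeartbeats 1000000

/-!
Primes of the completion of `(A ⧸ q)⁺` pull back, injectively and monotonically, along any
surjection from the completion of `A⁺`, so it suffices to find a prime `q` for which `A ⧸ q`
satisfies the hypothesis, and a surjection `A⁺ → (A ⧸ q)⁺`.

For `q`, let `ℓ` be the residue characteristic of `A`. The quotient `A ⧸ q` has characteristic zero
as soon as `ℓ ∉ q` or `ℓ = 0`, so one needs quotients of prescribed dimension by primes avoiding a
given nonzero element `x`. They come from chains of primes: if `p₀ < p₁ < p₂` and `x ∉ p₀`, then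
`p₁` can be replaced by a prime avoiding `x`. Prime avoidance gives `y ∈ p₂` outside all minimal
primes of `p₀ + (x)`; by Krull's principal ideal theorem a minimal prime `q` of `p₀ + (y)` has
height one over `p₀`, and if it contained `x`, it would be minimal over `p₀ + (x)`, contrary
to the choice of `y`.

For the surjection, a prime `Q` of `A⁺` over `q` gives an `A`-algebra map
`A⁺ → A⁺ ⧸ Q → (A ⧸ q)⁺`. Every element of the target is a root of a monic polynomial over `A`,
which splits over `A⁺`; being a root in a domain, the element is the image of a root in `A⁺`.
-/

open Ideal

section Dimension

variable {R : Type*} [CommRing R]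

theorem ringKrullDim_quotient_eq_coheight (p : PrimeSpectrum R) :
    ringKrullDim (R ⧸ p.asIdeal) = Order.coheight p := by
  rw [ringKrullDim_quotient, Order.coheight_eq_krullDim_Ici]
  rfl

variable [IsNoetherianRing R]

theorem not_lt_of_mem_minimalPrimes_sup_span_singleton {p₀ p₁ q : PrimeSpectrum R} {x : R}
    (hq : q.asIdeal ∈ (p₀.asIdeal ⊔ span {x}).minimalPrimes) (h₀ : p₀ < p₁) : ¬p₁ < q := by
  intro h₁
  let e := p₀.asIdeal.primeSpectrumQuotientOrderIsoZeroLocus.symm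
  let r₀ := e ⟨p₀, le_refl p₀.asIdeal⟩
  let r₁ := e ⟨p₁, h₀.le⟩
  let r := e ⟨q, (h₀.trans h₁).le⟩
  have h_height : r.asIdeal.height ≤ 1 := map_height_le_one_of_mem_minimalPrimes hq
  have h₀₁ : r₀.asIdeal < r₁.asIdeal := e.strictMono h₀
  have h₁q : r₁.asIdeal < r.asIdeal := e.strictMono h₁
  have h_two : (1 : ℕ∞) + 1 ≤ r.asIdeal.height :=
    calc (1 : ℕ∞) + 1 ≤ r₀.asIdeal.height + 1 + 1 := by gcongr; exact le_add_self
      _ ≤ r₁.asIdeal.height + 1 := by gcongr; exact height_add_one_le_of_lt_of_isPrime h₀₁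
      _ ≤ r.asIdeal.height := height_add_one_le_of_lt_of_isPrime h₁q
  exact absurd (h_two.trans h_height) (by norm_num)

theorem exists_mem_forall_minimalPrimes_notMem {p₀ p₁ p₂ : PrimeSpectrum R} (h₀ : p₀ < p₁)
    (h₁ : p₁ < p₂) (x : R) :
    ∃ y ∈ p₂.asIdeal, ∀ Q ∈ (p₀.asIdeal ⊔ span {x}).minimalPrimes, y ∉ Q := by
  let s := (p₀.asIdeal ⊔ span {x}).minimalPrimes
  have h_avoid : ¬(p₂.asIdeal : Set R) ⊆ ⋃ Q ∈ s, (Q : Set R) := by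
    intro h_cover
    obtain ⟨Q, hQ, hle⟩ := (subset_union_prime_finite (f := id)
      (finite_minimalPrimes_of_isNoetherianRing R _) ⊥ ⊥ fun Q hQ _ _ ↦ hQ.1.1).1 h_cover
    exact not_lt_of_mem_minimalPrimes_sup_span_singleton (q := ⟨Q, hQ.1.1⟩) hQ h₀
      (h₁.trans_le hle)
  simpa [s, Set.not_subset] using h_avoid

theorem exists_notMem_between_of_lt_of_lt {p₀ p₁ p₂ : PrimeSpectrum R} (h₀ : p₀ < p₁)
    (h₁ : p₁ < p₂) {x : R} (hx : x ∉ p₀.asIdeal) :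
    ∃ q : PrimeSpectrum R, x ∉ q.asIdeal ∧ p₀ < q ∧ q < p₂ := by
  by_cases hx₁ : x ∉ p₁.asIdeal
  · exact ⟨p₁, hx₁, h₀, h₁⟩
  have h_sup_le {I : Ideal R} {y : R} (hI : p₀.asIdeal ≤ I) (hy : y ∈ I) :
      p₀.asIdeal ⊔ span {y} ≤ I := sup_le hI ((span_singleton_le_iff_mem I).2 hy)
  obtain ⟨y, hy, hyQ⟩ := exists_mem_forall_minimalPrimes_notMem h₀ h₁ x
  have hy₀ : y ∉ p₀.asIdeal := by
    obtain ⟨Q, hQ, -⟩ := exists_minimalPrimes_le (h_sup_le h₀.le (not_not.1 hx₁))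
    exact fun hy₀ ↦ hyQ Q hQ (hQ.1.2 (mem_sup_left hy₀))
  obtain ⟨q, hq, hq₂⟩ := exists_minimalPrimes_le (h_sup_le (h₀.trans h₁).le hy)
  have hyq : y ∈ q := hq.1.2 (mem_sup_right (mem_span_singleton_self y))
  have h₀q : p₀.asIdeal < q :=
    lt_of_le_of_ne (le_sup_left.trans hq.1.2) fun h ↦ hy₀ (h ▸ hyq)
  have : q.IsPrime := hq.1.1
  refine ⟨⟨q, this⟩, fun hxq ↦ ?_, h₀q, lt_of_le_of_ne hq₂ ?_⟩
  · obtain ⟨Q, hQ, hQq⟩ := exists_minimalPrimes_le (h_sup_le h₀q.le hxq)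
    have hxQ : x ∈ Q := hQ.1.2 (mem_sup_right (mem_span_singleton_self x))
    refine not_lt_of_mem_minimalPrimes_sup_span_singleton (p₁ := ⟨Q, hQ.1.1⟩) (q := ⟨q, this⟩)
      hq ?_ ?_
    · exact lt_of_le_of_ne (le_sup_left.trans hQ.1.2) fun h ↦ hx (h ▸ hxQ)
    · exact (lt_of_le_of_ne hQq fun h ↦ hyQ Q hQ (h ▸ hyq) : Q < q)
  · rintro rfl
    exact not_lt_of_mem_minimalPrimes_sup_span_singleton hq h₀ h₁

theorem exists_gt_notMem_le_coheight {p : PrimeSpectrum R} {x : R} (hx : x ∉ p.asIdeal) {d : ℕ}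
    (hd : 1 ≤ d) (h : (d + 1 : ℕ) ≤ Order.coheight p) :
    ∃ q : PrimeSpectrum R, p < q ∧ x ∉ q.asIdeal ∧ d ≤ Order.coheight q := by
  obtain ⟨l, rfl, hl⟩ := Order.exists_series_of_le_coheight p h
  obtain ⟨q, hxq, hpq, hq⟩ := exists_notMem_between_of_lt_of_lt
    (l.strictMono (a := 0) (b := ⟨1, by lia⟩) (by simp [Fin.lt_def]))
    (l.strictMono (b := ⟨2, by lia⟩) (by simp [Fin.lt_def])) hx
  refine ⟨q, hpq, hxq, ?_⟩
  calc (d : ℕ∞) = (d - 1 : ℕ) + 1 := by norm_cast; lia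
    _ ≤ Order.coheight (l ⟨2, by lia⟩) + 1 := by
      gcongr
      convert! Order.rev_index_le_coheight l ⟨2, by lia⟩ using 2
      simp only [Fin.val_rev]
      lia
    _ ≤ Order.coheight q := Order.coheight_add_one_le hq

theorem exists_ge_notMem_coheight_eq {d : ℕ} (hd : 1 ≤ d) {x : R} (p : PrimeSpectrum R)
    (hx : x ∉ p.asIdeal) (h : d ≤ Order.coheight p) :
    ∃ q : PrimeSpectrum R, p ≤ q ∧ x ∉ q.asIdeal ∧ Order.coheight q = d := by
  have : WellFoundedGT (PrimeSpectrum R) := ⟨InvImage.wf PrimeSpectrum.asIdeal wellFounded_gt⟩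
  induction p using WellFoundedGT.induction with
  | _ p ih =>
    obtain h_eq | h_lt := h.eq_or_lt
    · exact ⟨p, le_rfl, hx, h_eq.symm⟩
    · obtain ⟨q, hpq, hxq, hq⟩ := exists_gt_notMem_le_coheight hx hd (Order.add_one_le_of_lt h_lt)
      obtain ⟨r, hqr, hr⟩ := ih q hpq hxq hq
      exact ⟨r, hpq.le.trans hqr, hr⟩

theorem exists_isPrime_notMem_ringKrullDim_quotient_eq [IsDomain R] {x : R} (hx : x ≠ 0) {d : ℕ}
    (hd : 1 ≤ d) (h : d ≤ ringKrullDim R) :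
    ∃ q : Ideal R, q.IsPrime ∧ x ∉ q ∧ ringKrullDim (R ⧸ q) = d := by
  rw [ringKrullDim, ← Order.coheight_bot_eq_krullDim] at h
  obtain ⟨q, -, hxq, hq⟩ := exists_ge_notMem_coheight_eq hd (x := x) ⊥ (by simpa using hx)
    (by exact_mod_cast h)
  exact ⟨q.asIdeal, q.isPrime, hxq, by rw [ringKrullDim_quotient_eq_coheight, hq]; rfl⟩

end Dimension

section Characteristic

variable {A : Type*} [CommRing A] [IsLocalRing A]

theorem charZero_quotient_of_ringChar_residueField_notMem {q : Ideal A} [q.IsPrime]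
    (hq : (ringChar (IsLocalRing.ResidueField A) : A) ∉ q) : CharZero (A ⧸ q) := by
  obtain ⟨ℓ, hℓ⟩ := CharP.exists (A ⧸ q)
  obtain h_prime | rfl := CharP.char_is_prime_or_zero (A ⧸ q) ℓ
  · let f : A ⧸ q →+* IsLocalRing.ResidueField A :=
      Quotient.factor (IsLocalRing.le_maximalIdeal IsPrime.ne_top')
    have h_cast : (ℓ : IsLocalRing.ResidueField A) = 0 := by
      rw [← map_natCast f, CharP.cast_eq_zero, map_zero]
    have h_ringChar : ringChar (IsLocalRing.ResidueField A) = ℓ :=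
      ((Nat.dvd_prime h_prime).1 (ringChar.dvd h_cast)).resolve_left CharP.ringChar_ne_one
    rw [h_ringChar, ← Quotient.eq_zero_iff_mem, map_natCast, CharP.cast_eq_zero] at hq
    exact absurd rfl hq
  · exact CharP.charP_to_charZero _

theorem charZero_quotient_of_charZero_residueField [CharZero (IsLocalRing.ResidueField A)]
    {q : Ideal A} (hq : q ≠ ⊤) : CharZero (A ⧸ q) :=
  let f : A ⧸ q →+* IsLocalRing.ResidueField A :=
    Quotient.factor (IsLocalRing.le_maximalIdeal hq)
  f.charZero

variable (A) in
theorem exists_ne_zero_forall_charZero_quotient [CharZero A] :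
    ∃ a : A, a ≠ 0 ∧ ∀ q : Ideal A, q.IsPrime → a ∉ q → CharZero (A ⧸ q) := by
  by_cases h : ringChar (IsLocalRing.ResidueField A) = 0
  · rw [CharP.ringChar_zero_iff_CharZero] at h
    exact ⟨1, one_ne_zero, fun q hq _ ↦ charZero_quotient_of_charZero_residueField hq.ne_top⟩
  · exact ⟨_, Nat.cast_ne_zero.2 h, fun q _ ↦ charZero_quotient_of_ringChar_residueField_notMem⟩

end Characteristic

theorem isPrecomplete_of_surjective {R M N : Type*} [CommRing R] [AddCommGroup M] [Module R M]
    [AddCommGroup N] [Module R N] (I : Ideal R) [IsPrecomplete I M] {f : M →ₗ[R] N}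
    (hf : Function.Surjective f) : IsPrecomplete I N := by
  rw [← AdicCompletion.of_surjective_iff]
  intro y
  obtain ⟨x, rfl⟩ := AdicCompletion.map_surjective I hf y
  obtain ⟨m, rfl⟩ := AdicCompletion.of_surjective I M x
  exact ⟨f m, (AdicCompletion.map_of ..).symm⟩

theorem isAdicComplete_maximalIdeal_of_surjective {A B : Type*} [CommRing A] [CommRing B]
    [IsNoetherianRing B] [IsLocalRing A] [IsLocalRing B]
    [IsPrecomplete (IsLocalRing.maximalIdeal A) A] [Algebra A B]
    (h : Function.Surjective (algebraMap A B)) :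
    IsAdicComplete (IsLocalRing.maximalIdeal B) B := by
  have h_prec : IsPrecomplete (IsLocalRing.maximalIdeal A) B :=
    isPrecomplete_of_surjective _ (f := Algebra.linearMap A B) h
  rw [← IsPrecomplete.map_algebraMap_iff (S := B),
    IsLocalRing.map_maximalIdeal_of_surjective _ h] at h_prec
  exact { toIsHausdorff := inferInstance, toIsPrecomplete := h_prec }

section AdicCompletion

variable {R S : Type*} [CommRing R] [CommRing S]

theorem pow_le_comap_pow_of_map_le {f : R →+* S} {I : Ideal R} {J : Ideal S} (h : I.map f ≤ J)
    (n : ℕ) : I ^ n ≤ (J ^ n).comap f :=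
  map_le_iff_le_comap.1 ((Ideal.map_pow f I n).trans_le (pow_right_mono h n))

theorem factorPow_comp_quotientMap_comp_evalₐ {f : R →+* S} {I : Ideal R} {J : Ideal S}
    (h : I.map f ≤ J) {m n : ℕ} (hmn : m ≤ n) :
    (Quotient.factorPow J hmn).comp ((quotientMap (J ^ n) f (pow_le_comap_pow_of_map_le h n)).comp
        (AdicCompletion.evalₐ I n : AdicCompletion I R →+* R ⧸ I ^ n)) =
      (quotientMap (J ^ m) f (pow_le_comap_pow_of_map_le h m)).comp
        (AdicCompletion.evalₐ I m : AdicCompletion I R →+* R ⧸ I ^ m) := by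
  ext x
  obtain ⟨r, rfl⟩ := AdicCompletion.mk_surjective I R x
  have h_sub : r m - r n ∈ I ^ m := by
    have h_cauchy : r m ≡ r n [SMOD (I ^ m • ⊤ : Submodule R R)] := r.2 hmn
    rwa [SModEq.sub_mem, smul_eq_mul, mul_top] at h_cauchy
  have h_map_sub : f (r m) - f (r n) ∈ J ^ m := by
    rw [← map_sub]
    exact pow_le_comap_pow_of_map_le h m h_sub
  simpa using (Ideal.Quotient.eq.2 h_map_sub).symm

/-- The ring homomorphism between adic completions induced by `f : R →+* S`. Unlike
`AdicCompletion.map`, which is linear over a fixed ring, it allows completing source and target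
along ideals of different rings. -/
noncomputable def adicCompletionMap (f : R →+* S) {I : Ideal R} {J : Ideal S} (h : I.map f ≤ J) :
    AdicCompletion I R →+* AdicCompletion J S :=
  AdicCompletion.liftRingHom J _ (factorPow_comp_quotientMap_comp_evalₐ h)

theorem evalₐ_adicCompletionMap_mk (f : R →+* S) {I : Ideal R} {J : Ideal S} (h : I.map f ≤ J)
    (r : AdicCompletion.AdicCauchySequence I R) (n : ℕ) :
    AdicCompletion.evalₐ J n (adicCompletionMap f h (AdicCompletion.mk I R r)) =
      Ideal.Quotient.mk (J ^ n) (f (r n)) := by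
  rw [adicCompletionMap, AdicCompletion.evalₐ_liftRingHom]
  simp

theorem adicCompletionMap_surjective {f : R →+* S} (hf : Function.Surjective f) (I : Ideal R) :
    Function.Surjective (adicCompletionMap f (le_refl (I.map f))) := by
  let := f.toAlgebra
  intro y
  obtain ⟨s, rfl⟩ := AdicCompletion.mk_surjective _ S y
  have h_smul_top (n : ℕ) (a : S) : a ∈ (I ^ n • ⊤ : Submodule R S) ↔ a ∈ I.map f ^ n := by
    rw [smul_top_eq_map, Ideal.map_pow, Submodule.restrictScalars_mem]; rfl
  let s' : AdicCompletion.AdicCauchySequence I S := .mk I S s fun n ↦ by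
    have := s.2 n.le_succ
    rwa [SModEq.sub_mem, smul_eq_mul, mul_top, ← h_smul_top, ← SModEq.sub_mem] at this
  obtain ⟨x, hx⟩ := AdicCompletion.map_surjective I (f := Algebra.linearMap R S) hf
    (AdicCompletion.mk I S s')
  obtain ⟨r, rfl⟩ := AdicCompletion.mk_surjective I R x
  refine ⟨AdicCompletion.mk I R r, AdicCompletion.ext_evalₐ fun n ↦ ?_⟩
  rw [evalₐ_adicCompletionMap_mk, AdicCompletion.evalₐ_mk, Ideal.Quotient.eq, ← h_smul_top,
    ← Submodule.Quotient.eq]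
  exact congr_arg (AdicCompletion.eval I S n) hx

end AdicCompletion

section IntegralClosure

open Polynomial

variable {A : Type*} [CommRing A]

theorem splits_map_integralClosure_of_monic {K : Type*} [Field K] [IsAlgClosed K] [Algebra A K]
    {f : A[X]} (hf : f.Monic) : (f.map (algebraMap A (integralClosure A K))).Splits := by
  refine Splits.of_splits_map_of_injective (i := algebraMap (integralClosure A K) K)
    Subtype.val_injective (IsAlgClosed.splits _) fun a ha ↦ ⟨⟨a, f, hf, ?_⟩, rfl⟩
  have h_root := (mem_roots'.1 ha).2
  rwa [Polynomial.map_map, ← IsScalarTower.algebraMap_eq, IsRoot, eval_map] at h_root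

theorem algHom_surjective_of_forall_monic_splits {S T : Type*} [CommRing S] [CommRing T]
    [IsDomain T] [Algebra A S] [Algebra A T] [Algebra.IsIntegral A T]
    (hS : ∀ f : A[X], f.Monic → (f.map (algebraMap A S)).Splits) (φ : S →ₐ[A] T) :
    Function.Surjective φ := by
  intro t
  obtain ⟨f, hf, hft⟩ := Algebra.IsIntegral.isIntegral (R := A) t
  obtain ⟨s, hs⟩ := splits_iff_exists_multiset.1 (hS f hf)
  rw [(hf.map _).leadingCoeff, C_1, one_mul] at hs
  have h_prod : (s.map fun a ↦ t - φ a).prod = 0 := by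
    rw [← hft, ← φ.comp_algebraMap, ← eval₂_map, hs, eval₂_multiset_prod]
    simp
  obtain ⟨a, -, ha⟩ := Multiset.mem_map.1 (Multiset.prod_eq_zero_iff.1 h_prod)
  exact ⟨a, (sub_eq_zero.1 ha).symm⟩

theorem nonempty_algHom_integralClosure_quotient (K L : Type*) [Field K] [Algebra A K]
    [FaithfulSMul A K] (q : Ideal A) [q.IsPrime] [Field L] [IsAlgClosed L] [Algebra (A ⧸ q) L]
    [FaithfulSMul (A ⧸ q) L] [Algebra A L] [IsScalarTower A (A ⧸ q) L] :
    Nonempty (integralClosure A K →ₐ[A] integralClosure (A ⧸ q) L) := by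
  have : FaithfulSMul A (integralClosure A K) :=
    (faithfulSMul_iff_algebraMap_injective _ _).2 fun a b h ↦
      FaithfulSMul.algebraMap_injective A K (congr_arg Subtype.val h)
  obtain ⟨⟨Q, _, _⟩⟩ := nonempty_primesOver (S := integralClosure A K) q
  let g : (integralClosure A K ⧸ Q) →ₐ[A ⧸ q] L := IsAlgClosed.lift
  have hg (x) : g x ∈ integralClosure (A ⧸ q) L := (Algebra.IsIntegral.isIntegral x).map g
  exact ⟨((g.codRestrict _ hg).restrictScalars A).comp (Quotient.mkₐ A Q)⟩

theorem exists_surjective_integralClosure_quotient (K L : Type*) [Field K] [IsAlgClosed K]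
    [Algebra A K] [FaithfulSMul A K] (q : Ideal A) [q.IsPrime] [Field L] [IsAlgClosed L]
    [Algebra (A ⧸ q) L] [FaithfulSMul (A ⧸ q) L] [Algebra A L] [IsScalarTower A (A ⧸ q) L] :
    ∃ φ : integralClosure A K →ₐ[A] integralClosure (A ⧸ q) L, Function.Surjective φ := by
  obtain ⟨φ⟩ := nonempty_algHom_integralClosure_quotient K L q
  have : Algebra.IsIntegral A (integralClosure (A ⧸ q) L) := .trans (A ⧸ q)
  exact ⟨φ, algHom_surjective_of_forall_monic_splits
    (fun _ ↦ splits_map_integralClosure_of_monic) φ⟩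

end IntegralClosure

section AbsoluteIntegralClosure

variable (A : Type*) [CommRing A] [IsDomain A]

/-- The absolute integral closure `A⁺` of a domain `A`. -/
abbrev AbsoluteIntegralClosure : Type _ := integralClosure A (AlgebraicClosure (FractionRing A))

instance faithfulSMul_algebraicClosure_fractionRing :
    FaithfulSMul A (AlgebraicClosure (FractionRing A)) :=
  .trans A (FractionRing A) _

theorem exists_surjective_adicCompletion_absoluteIntegralClosure_quotient (q : Ideal A)
    [q.IsPrime] (n : ℕ) :
    ∃ g : AdicCompletion (span {(n : AbsoluteIntegralClosure A)}) (AbsoluteIntegralClosure A) →+*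
        AdicCompletion (span {(n : AbsoluteIntegralClosure (A ⧸ q))})
          (AbsoluteIntegralClosure (A ⧸ q)),
      Function.Surjective g := by
  obtain ⟨φ, hφ⟩ := exists_surjective_integralClosure_quotient
    (AlgebraicClosure (FractionRing A)) (AlgebraicClosure (FractionRing (A ⧸ q))) q
  have h_map : (span {(n : AbsoluteIntegralClosure A)}).map (φ : _ →+* _) =
      span {(n : AbsoluteIntegralClosure (A ⧸ q))} := by
    rw [map_span, Set.image_singleton, map_natCast]
  rw [← h_map]
  exact ⟨_, adicCompletionMap_surjective hφ _⟩

end AbsoluteIntegralClosure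

universe u

theorem absoluteIntegralClosure_uncountable_chain_of_primes_of_dim_two_case_general
    {ι : Type*} [Preorder ι] (n : ℕ) {d : ℕ} (hd : 1 ≤ d)
    (H : ∀ (A : Type u) [CommRing A] [IsDomain A] [IsNoetherianRing A] [IsLocalRing A],
      IsAdicComplete (IsLocalRing.maximalIdeal A) A → CharZero A →
      (n : A) ∈ IsLocalRing.maximalIdeal A → ringKrullDim A = d →
      ∃ P : ι → PrimeSpectrum (AdicCompletion (span {(n : AbsoluteIntegralClosure A)})
        (AbsoluteIntegralClosure A)), StrictMono P)
    (A : Type u) [CommRing A] [IsDomain A] [IsNoetherianRing A] [IsLocalRing A]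
    [IsAdicComplete (IsLocalRing.maximalIdeal A) A] [CharZero A]
    (hn : (n : A) ∈ IsLocalRing.maximalIdeal A) (hdim : d ≤ ringKrullDim A) :
    ∃ P : ι → PrimeSpectrum (AdicCompletion (span {(n : AbsoluteIntegralClosure A)})
      (AbsoluteIntegralClosure A)), StrictMono P := by
  obtain ⟨a, ha, h_char⟩ := exists_ne_zero_forall_charZero_quotient A
  obtain ⟨q, hq, haq, hq_dim⟩ := exists_isPrime_notMem_ringKrullDim_quotient_eq ha hd hdim
  have h_surj : Function.Surjective (algebraMap A (A ⧸ q)) := Quotient.mk_surjective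
  have : IsLocalRing (A ⧸ q) := .of_surjective' _ h_surj
  have hnq : (n : A ⧸ q) ∈ IsLocalRing.maximalIdeal (A ⧸ q) := by
    rw [← IsLocalRing.map_maximalIdeal_of_surjective _ h_surj, ← map_natCast (algebraMap A (A ⧸ q))]
    exact mem_map_of_mem _ hn
  obtain ⟨P, hP⟩ :=
    H (A ⧸ q) (isAdicComplete_maximalIdeal_of_surjective h_surj) (h_char q hq haq) hnq hq_dim
  obtain ⟨g, hg⟩ := exists_surjective_adicCompletion_absoluteIntegralClosure_quotient A q n
  exact ⟨PrimeSpectrum.comap g ∘ P, (RingHom.strictMono_comap_of_surjective hg).comp hP⟩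

/-- if for every complete noetherian local domain of mixed characteristic
`(0, p)` and Krull dimension exactly `2` the `p`-adic completion of the absolute integral
closure `A⁺` has a strictly increasing chain of prime ideals indexed by `(0,1)`, then the
same holds for every complete noetherian local domain of mixed characteristic of Krull
dimension at least `2`; in particular the latter has uncountable Krull dimension. -/
theorem absoluteIntegralClosure_uncountable_chain_of_primes_of_dim_two_case
    (p : ℕ) (hp : p.Prime)
    (H : ∀ (A : Type) [CommRing A] [IsDomain A] [IsNoetherianRing A] [IsLocalRing A],
      IsAdicComplete (IsLocalRing.maximalIdeal A) A → CharZero A →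
      (p : A) ∈ IsLocalRing.maximalIdeal A → ringKrullDim A = 2 →
      ∃ P : Set.Ioo (0 : ℝ) 1 →
          Ideal (AdicCompletion
            (Ideal.span
              {(p : integralClosure A (AlgebraicClosure (FractionRing A)))})
            (integralClosure A (AlgebraicClosure (FractionRing A)))),
        (∀ l, (P l).IsPrime) ∧
        ∀ l m : Set.Ioo (0 : ℝ) 1, (l : ℝ) < (m : ℝ) → P l < P m) :
    ∀ (A : Type) [CommRing A] [IsDomain A] [IsNoetherianRing A] [IsLocalRing A],
      IsAdicComplete (IsLocalRing.maximalIdeal A) A → CharZero A →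
      (p : A) ∈ IsLocalRing.maximalIdeal A → 2 ≤ ringKrullDim A →
      ∃ P : Set.Ioo (0 : ℝ) 1 →
          Ideal (AdicCompletion
            (Ideal.span
              {(p : integralClosure A (AlgebraicClosure (FractionRing A)))})
            (integralClosure A (AlgebraicClosure (FractionRing A)))),
        (∀ l, (P l).IsPrime) ∧
        ∀ l m : Set.Ioo (0 : ℝ) 1, (l : ℝ) < (m : ℝ) → P l < P m := by
  intro A _ _ _ _ _ _ hpm hdim
  obtain ⟨P, hP⟩ := absoluteIntegralClosure_uncountable_chain_of_primes_of_dim_two_case_general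
    (d := 2) p one_le_two (fun B _ _ _ _ hB hB₀ hpB hB₂ ↦
      let ⟨P, hP, hlt⟩ := H B hB hB₀ hpB hB₂
      ⟨fun l ↦ ⟨P l, hP l⟩, fun l m hlm ↦ hlt l m hlm⟩) A hpm hdim
  exact ⟨fun l ↦ (P l).asIdeal, fun l ↦ (P l).isPrime, fun l m hlm ↦ hP hlm⟩
end
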